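/- arXiv:1701.06096 — 2 statements merged into one kernel-verified Lean document; each statement's English description precedes it below -/
import Mathlib

section
/- Theorem A.1, strong duality part: the problem (LinearP) has a finite optimal value (the infimum of its objective over primal feasible solutions is a real number) if and only if (LinearD) has a finite optimal value (the supremum of its objective over dual feasible solutions is a real number), and in that case the two optimal values coincide. -/
open Matrix
open scoped BigOperators Classical

/-- Conditional value-at-risk at confidence level `α` of a random variable with
realizations `v s` and probabilities `p s` on a finite space. -/
noncomputable def CVaR {ι : Type*} [Fintype ι] (α : ℝ) (p v : ι → ℝ) : ℝ :=
  sInf {r : ℝ | ∃ η : ℝ, r = η + (1 - α)⁻¹ * ∑ s, p s * max (v s - η) 0}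

/-- Value-at-risk at confidence level `α`: the minimal `η` with `P(V ≤ η) ≥ α`
(stated as an infimum; the minimum exists for finitely many realizations). -/
noncomputable def VaR {ι : Type*} [Fintype ι] (α : ℝ) (p v : ι → ℝ) : ℝ :=
  sInf {η : ℝ | α ≤ ∑ s, if v s ≤ η then p s else 0}

/-- The scenario-`s` realization `ĝ_s(x,y_s) = ḡ_s x + g̃_s y_s` of the random
outcome vector `Ĝ(x,y)`. -/
noncomputable def Ghat {m n1 n2 d : ℕ} (gbar : Fin m → Matrix (Fin d) (Fin n1) ℝ)
    (gtil : Fin m → Matrix (Fin d) (Fin n2) ℝ)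
    (x : Fin n1 → ℝ) (y : Fin m → Fin n2 → ℝ) (s : Fin m) : Fin d → ℝ :=
  (gbar s).mulVec x + (gtil s).mulVec (y s)

/-- `x ∈ X` and `y_s ∈ Y(x,s)` for every scenario `s`. -/
def InXY {m m1 m2 n1 n2 : ℕ} (A : Matrix (Fin m1) (Fin n1) ℝ) (b : Fin m1 → ℝ)
    (Tm : Fin m → Matrix (Fin m2) (Fin n1) ℝ)
    (Wm : Fin m → Matrix (Fin m2) (Fin n2) ℝ)
    (hvec : Fin m → Fin m2 → ℝ) (x : Fin n1 → ℝ) (y : Fin m → Fin n2 → ℝ) : Prop :=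
  (∀ i, 0 ≤ x i) ∧ (∀ i, A.mulVec x i ≤ b i) ∧
    ∀ s, (∀ j, 0 ≤ y s j) ∧ ∀ i, hvec s i ≤ ((Tm s).mulVec x + (Wm s).mulVec (y s)) i

/-- Feasibility for problem (LinearP). -/
def PrimalFeas {m m1 m2 n1 n2 d τ : ℕ} (α : ℝ) (p : Fin m → ℝ)
    (A : Matrix (Fin m1) (Fin n1) ℝ) (b : Fin m1 → ℝ)
    (Tm : Fin m → Matrix (Fin m2) (Fin n1) ℝ)
    (Wm : Fin m → Matrix (Fin m2) (Fin n2) ℝ)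
    (hvec : Fin m → Fin m2 → ℝ)
    (gbar : Fin m → Matrix (Fin d) (Fin n1) ℝ)
    (gtil : Fin m → Matrix (Fin d) (Fin n2) ℝ)
    (z : Fin τ → Fin d → ℝ) (pt : Fin τ → ℝ) (C : Set (Fin d → ℝ))
    (x : Fin n1 → ℝ) (y : Fin m → Fin n2 → ℝ) : Prop :=
  InXY A b Tm Wm hvec x y ∧
    ∀ c ∈ C, CVaR α p (fun s => c ⬝ᵥ Ghat gbar gtil x y s)
      ≤ CVaR α pt (fun i => c ⬝ᵥ z i)

/-- Objective function of problem (LinearP). -/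
noncomputable def PrimalObj {m n1 n2 : ℕ} (p : Fin m → ℝ) (fv : Fin n1 → ℝ)
    (q : Fin m → Fin n2 → ℝ) (x : Fin n1 → ℝ) (y : Fin m → Fin n2 → ℝ) : ℝ :=
  fv ⬝ᵥ x + ∑ s, p s * (q s ⬝ᵥ y s)

/-- Feasibility for the dual problem (LinearD), with the finitely supported
measures `μ` and `ν_s` represented by common support points `c k` and weights
`mw k` and `nw s k` (`k ∈ Fin K`). -/
def DualFeas {m m1 m2 n1 n2 d K : ℕ} (α : ℝ) (p : Fin m → ℝ)
    (A : Matrix (Fin m1) (Fin n1) ℝ) (fv : Fin n1 → ℝ)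
    (Tm : Fin m → Matrix (Fin m2) (Fin n1) ℝ)
    (Wm : Fin m → Matrix (Fin m2) (Fin n2) ℝ)
    (q : Fin m → Fin n2 → ℝ)
    (gbar : Fin m → Matrix (Fin d) (Fin n1) ℝ)
    (gtil : Fin m → Matrix (Fin d) (Fin n2) ℝ)
    (C : Set (Fin d → ℝ))
    (c : Fin K → Fin d → ℝ) (mw : Fin K → ℝ) (nw : Fin m → Fin K → ℝ)
    (lam : Fin m1 → ℝ) (piv : Fin m → Fin m2 → ℝ) : Prop :=
  (∀ k, c k ∈ C) ∧ (∀ k, 0 ≤ mw k) ∧ (∀ s k, 0 ≤ nw s k) ∧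
    (∀ i, 0 ≤ lam i) ∧ (∀ s i, 0 ≤ piv s i) ∧
    (∀ k, ∑ s, p s * nw s k = mw k) ∧
    (∀ s k, nw s k ≤ mw k / (1 - α)) ∧
    (∀ j, ∑ s, p s * (Matrix.vecMul (piv s) (Tm s) j
        - ∑ k, nw s k * Matrix.vecMul (c k) (gbar s) j)
      ≤ fv j + Matrix.vecMul lam A j) ∧
    ∀ s j, Matrix.vecMul (piv s) (Wm s) j
        - ∑ k, nw s k * Matrix.vecMul (c k) (gtil s) j ≤ q s j

/-- Objective function of the dual problem (LinearD). -/
noncomputable def DualObj {m m1 m2 d τ K : ℕ} (α : ℝ) (p : Fin m → ℝ)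
    (b : Fin m1 → ℝ) (hvec : Fin m → Fin m2 → ℝ)
    (z : Fin τ → Fin d → ℝ) (pt : Fin τ → ℝ)
    (c : Fin K → Fin d → ℝ) (mw : Fin K → ℝ)
    (lam : Fin m1 → ℝ) (piv : Fin m → Fin m2 → ℝ) : ℝ :=
  -(∑ k, mw k * CVaR α pt (fun i => c k ⬝ᵥ z i)) - lam ⬝ᵥ b
    + ∑ s, p s * (piv s ⬝ᵥ hvec s)

/-!
By the Rockafellar–Uryasev formula and comonotone additivity, `e ↦ CVaR (eᵀZ)` is linear on every
piece of `C` on which the order of the numbers `eᵀz i` does not change. Cutting the polytope `C`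
along the hyperplanes `eᵀ(z i - z j) = 0` gives finitely many such pieces, each of them a polytope,
and their vertices generate the graph of `e ↦ CVaR (eᵀZ)` over `C`. Since `e ↦ CVaR (eᵀĜ)` is
sublinear, the risk constraints at these vertices imply those at all of `C`; dually, the measures
of (LinearD) can be moved to these vertices without changing feasibility or the objective. What
remains is a finite linear program (with the conditional value-at-risk in epigraph form) and its
dual, and these are handled by Farkas' lemma.
-/

section Farkas

variable {𝕜 V ι : Type*} [Field 𝕜] [LinearOrder 𝕜] [IsStrictOrderedRing 𝕜]
  [AddCommGroup V] [Module 𝕜 V]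

theorem mem_hull_image_of_forall_nonneg (s : Finset ι) (a : ι → Module.Dual 𝕜 V)
    (φ : Module.Dual 𝕜 V) (h : ∀ x, (∀ i ∈ s, 0 ≤ a i x) → 0 ≤ φ x) :
    φ ∈ PointedCone.hull 𝕜 (a '' s) := by
  induction s using Finset.induction_on generalizing a φ with
  | empty =>
    have hφ : φ = 0 := by
      ext x
      refine le_antisymm ?_ (h x (by simp))
      simpa using h (-x) (by simp)
    exact hφ ▸ zero_mem _
  | insert n s _ ih =>
    have hsub : a '' s ⊆ a '' ↑(insert n s) := by gcongr; exact Finset.subset_insert n s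
    by_cases hφ : ∀ x, (∀ i ∈ s, 0 ≤ a i x) → 0 ≤ φ x
    · exact Submodule.span_mono hsub (ih a φ hφ)
    push Not at hφ
    obtain ⟨x₀, hx₀, hφx₀⟩ := hφ
    have hnx₀ : a n x₀ < 0 := by
      by_contra! hn0
      exact hφx₀.not_ge (h x₀ (Finset.forall_mem_insert _ _ _ |>.2 ⟨hn0, hx₀⟩))
    -- Projecting onto the kernel of `a n` along `x₁` leaves a problem with one functional less.
    let x₁ : V := (-a n x₀)⁻¹ • x₀
    have hscale : 0 < (-a n x₀)⁻¹ := inv_pos.2 (neg_pos.2 hnx₀)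
    have hnx₁ : a n x₁ = -1 := by
      simp only [x₁, map_smul, smul_eq_mul]
      field_simp [hnx₀.ne]
    have hx₁ : ∀ i ∈ s, 0 ≤ a i x₁ := fun i hi => by
      simpa only [x₁, map_smul, smul_eq_mul] using mul_nonneg hscale.le (hx₀ i hi)
    have hφx₁ : φ x₁ ≤ 0 := by
      simpa only [x₁, map_smul, smul_eq_mul] using mul_nonpos_of_nonneg_of_nonpos hscale.le hφx₀.le
    have hproj : φ + φ x₁ • a n ∈ PointedCone.hull 𝕜 ((fun i => a i + a i x₁ • a n) '' s) := by
      refine ih _ _ fun x hx => ?_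
      have hker : 0 ≤ φ (x + a n x • x₁) := by
        refine h _ (Finset.forall_mem_insert _ _ _ |>.2 ⟨by simp [hnx₁], fun i hi => ?_⟩)
        simpa [mul_comm] using hx i hi
      simpa [mul_comm] using hker
    have han : a n ∈ PointedCone.hull 𝕜 (a '' ↑(insert n s)) :=
      PointedCone.subset_hull ⟨n, Finset.mem_coe.2 (Finset.mem_insert_self n s), rfl⟩
    have hle : PointedCone.hull 𝕜 ((fun i => a i + a i x₁ • a n) '' s)
        ≤ PointedCone.hull 𝕜 (a '' ↑(insert n s)) := by
      refine Submodule.span_le.2 ?_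
      rintro _ ⟨i, hi, rfl⟩
      exact add_mem (PointedCone.subset_hull (hsub ⟨i, hi, rfl⟩))
        (PointedCone.smul_mem _ (hx₁ i hi) han)
    simpa using add_mem (hle hproj) (PointedCone.smul_mem _ (neg_nonneg.2 hφx₁) han)

end Farkas

section LinearProgramming

variable {𝕜 ι κ : Type*} [Field 𝕜] [LinearOrder 𝕜] [IsStrictOrderedRing 𝕜] [Fintype ι]
  {M : Matrix κ ι 𝕜} {b : κ → 𝕜} {c : ι → 𝕜}

theorem dotProduct_nonneg_of_recession {x₀ x : ι → 𝕜} {w : 𝕜} (hx₀ : 0 ≤ x₀) (hb₀ : b ≤ M *ᵥ x₀)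
    (hw : ∀ x, 0 ≤ x → b ≤ M *ᵥ x → w ≤ c ⬝ᵥ x) (hx : 0 ≤ x) (hMx : 0 ≤ M *ᵥ x) :
    0 ≤ c ⬝ᵥ x := by
  by_contra! hneg
  have hr : 0 ≤ (c ⬝ᵥ x₀ - w + 1) / -(c ⬝ᵥ x) :=
    div_nonneg (by linarith [hw x₀ hx₀ hb₀]) (neg_pos.2 hneg).le
  have hray := hw (x₀ + ((c ⬝ᵥ x₀ - w + 1) / -(c ⬝ᵥ x)) • x) (add_nonneg hx₀ (smul_nonneg hr hx))
    (by rw [mulVec_add, mulVec_smul]; exact le_add_of_le_of_nonneg hb₀ (smul_nonneg hr hMx))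
  rw [dotProduct_add, dotProduct_smul, smul_eq_mul, div_neg, neg_mul,
    div_mul_cancel₀ _ hneg.ne] at hray
  linarith

variable [Fintype κ]

theorem exists_vecMul_le_of_forall_nonneg (h : ∀ x, 0 ≤ x → 0 ≤ M *ᵥ x → 0 ≤ c ⬝ᵥ x) :
    ∃ y, 0 ≤ y ∧ y ᵥ* M ≤ c := by
  let a : κ ⊕ ι → Module.Dual 𝕜 (ι → 𝕜) :=
    Sum.elim (fun k => LinearMap.proj k ∘ₗ M.mulVecLin) (fun i => LinearMap.proj i)
  have hmem := mem_hull_image_of_forall_nonneg Finset.univ a (dotProductBilin 𝕜 𝕜 c)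
    fun x hx => h x (fun i => hx (.inr i) (Finset.mem_univ _))
      (fun k => hx (.inl k) (Finset.mem_univ _))
  rw [Finset.coe_univ, Set.image_univ] at hmem
  obtain ⟨w, hw⟩ := (Submodule.mem_span_range_iff_exists_fun _).1 hmem
  obtain ⟨w, hw0, hw⟩ : ∃ w : κ ⊕ ι → 𝕜, 0 ≤ w ∧ ∑ r, w r • a r = dotProductBilin 𝕜 𝕜 c :=
    ⟨fun r => w r, fun r => (w r).2, hw⟩
  refine ⟨fun k => w (.inl k), fun k => hw0 (.inl k), fun i => ?_⟩
  have hi : c i = ((fun k => w (.inl k)) ᵥ* M) i + w (.inr i) := by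
    have := LinearMap.congr_fun hw (Pi.single i 1)
    simpa [a, Fintype.sum_sum_type, Pi.single_apply, vecMul, dotProduct] using this.symm
  exact hi ▸ le_add_of_nonneg_right (hw0 (.inr i))

/- Farkas' lemma for the homogenization `M x ≥ t b`, `x ≥ 0`, `t ≥ 0`; the recession directions are
the case `t = 0`. -/
theorem exists_vecMul_le_and_le_dotProduct {x₀ : ι → 𝕜} {w : 𝕜} (hx₀ : 0 ≤ x₀)
    (hb₀ : b ≤ M *ᵥ x₀) (hw : ∀ x, 0 ≤ x → b ≤ M *ᵥ x → w ≤ c ⬝ᵥ x) :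
    ∃ y, 0 ≤ y ∧ y ᵥ* M ≤ c ∧ w ≤ y ⬝ᵥ b := by
  obtain ⟨y, hy, hle⟩ := exists_vecMul_le_of_forall_nonneg
    (M := fromCols M (replicateCol Unit (-b))) (c := Sum.elim c fun _ => -w) fun x hx hMx => by
      obtain ⟨x, t, rfl⟩ : ∃ (x' : ι → 𝕜) (t : 𝕜), x = Sum.elim x' fun _ : Unit => t :=
        ⟨x ∘ .inl, x (.inr ()), by ext (i | i) <;> rfl⟩
      have hx' : 0 ≤ x := fun i => hx (.inl i)
      have ht : 0 ≤ t := hx (.inr ())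
      have hcol : replicateCol Unit (-b) *ᵥ (fun _ => t) = -(t • b) := by
        ext k
        simp [mulVec, dotProduct, mul_comm]
      have hcost : (fun _ : Unit => -w) ⬝ᵥ (fun _ => t) = -(t * w) := by
        simp [dotProduct, mul_comm]
      rw [fromCols_mulVec_sumElim, hcol, ← sub_eq_add_neg, sub_nonneg] at hMx
      rw [sumElim_dotProduct_sumElim, hcost, ← sub_eq_add_neg, sub_nonneg]
      rcases ht.eq_or_lt with rfl | ht
      · simpa using dotProduct_nonneg_of_recession hx₀ hb₀ hw hx' (by simpa using hMx)
      · have hscaled := hw (t⁻¹ • x) (smul_nonneg (inv_nonneg.2 ht.le) hx') (by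
          rwa [mulVec_smul, le_inv_smul_iff_of_pos ht])
        rwa [dotProduct_smul, smul_eq_mul, le_inv_mul_iff₀ ht] at hscaled
  rw [vecMul_fromCols] at hle
  refine ⟨y, hy, fun i => hle (.inl i), ?_⟩
  exact neg_le_neg_iff.1 (dotProduct_neg y b ▸ hle (.inr ()))

theorem dotProduct_le_dotProduct_of_vecMul_le {x : ι → 𝕜} {y : κ → 𝕜} (hx : 0 ≤ x)
    (hb : b ≤ M *ᵥ x) (hy : 0 ≤ y) (hc : y ᵥ* M ≤ c) : y ⬝ᵥ b ≤ c ⬝ᵥ x :=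
  calc y ⬝ᵥ b ≤ y ⬝ᵥ M *ᵥ x := dotProduct_le_dotProduct_of_nonneg_left hb hy
    _ = y ᵥ* M ⬝ᵥ x := dotProduct_mulVec y M x
    _ ≤ c ⬝ᵥ x := dotProduct_le_dotProduct_of_nonneg_right hc hx

theorem isGreatest_dual_of_isGLB_primal {v : 𝕜}
    (hv : IsGLB ((c ⬝ᵥ ·) '' {x | 0 ≤ x ∧ b ≤ M *ᵥ x}) v) :
    IsGreatest ((· ⬝ᵥ b) '' {y | 0 ≤ y ∧ y ᵥ* M ≤ c}) v := by
  have hweak : v ∈ upperBounds ((· ⬝ᵥ b) '' {y | 0 ≤ y ∧ y ᵥ* M ≤ c}) := by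
    rintro _ ⟨y, ⟨hy, hc⟩, rfl⟩
    refine hv.2 ?_
    rintro _ ⟨x, ⟨hx, hb⟩, rfl⟩
    exact dotProduct_le_dotProduct_of_vecMul_le hx hb hy hc
  obtain ⟨_, x₀, ⟨hx₀, hb₀⟩, rfl⟩ := hv.nonempty
  obtain ⟨y, hy, hc, hvy⟩ := exists_vecMul_le_and_le_dotProduct hx₀ hb₀
    fun x hx hb => hv.1 ⟨x, ⟨hx, hb⟩, rfl⟩
  have hmem : y ⬝ᵥ b ∈ (· ⬝ᵥ b) '' {y | 0 ≤ y ∧ y ᵥ* M ≤ c} := ⟨y, ⟨hy, hc⟩, rfl⟩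
  exact ⟨hvy.antisymm (hweak hmem) ▸ hmem, hweak⟩

/- The dual program is the primal one for `-Mᵀ`, up to the sign of the objective. -/
theorem isGLB_primal_iff_isLUB_dual {v : 𝕜} :
    IsGLB ((c ⬝ᵥ ·) '' {x | 0 ≤ x ∧ b ≤ M *ᵥ x}) v ↔
      IsLUB ((· ⬝ᵥ b) '' {y | 0 ≤ y ∧ y ᵥ* M ≤ c}) v := by
  refine ⟨fun hv => (isGreatest_dual_of_isGLB_primal hv).isLUB, fun hv => ?_⟩
  have hdual : -((· ⬝ᵥ b) '' {y | 0 ≤ y ∧ y ᵥ* M ≤ c}) =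
      ((-b) ⬝ᵥ ·) '' {y | 0 ≤ y ∧ -c ≤ (-Mᵀ) *ᵥ y} := by
    simp only [neg_mulVec, mulVec_transpose, neg_le_neg_iff, neg_dotProduct, dotProduct_comm b]
    rw [← Set.image_neg_eq_neg, Set.image_image]
  have hprimal : -((· ⬝ᵥ (-c)) '' {x | 0 ≤ x ∧ x ᵥ* (-Mᵀ) ≤ -b}) =
      (c ⬝ᵥ ·) '' {x | 0 ≤ x ∧ b ≤ M *ᵥ x} := by
    simp only [vecMul_neg, vecMul_transpose, neg_le_neg_iff, dotProduct_neg, dotProduct_comm _ c]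
    rw [← Set.image_neg_eq_neg, Set.image_image]
    simp only [neg_neg]
  have hneg := isGreatest_dual_of_isGLB_primal (hdual ▸ hv.neg)
  have := hneg.isLUB.neg
  rwa [hprimal, neg_neg] at this

end LinearProgramming

section PolytopeSubdivision

variable {𝕜 E : Type*} [Field 𝕜] [AddCommGroup E] [Module 𝕜 E] {l : Module.Dual 𝕜 E} {x y : E}

/-- The point where the line through `x` and `y` meets the hyperplane `l = 0`; it is only
meaningful when `l x ≠ l y`. -/
def crossing (l : Module.Dual 𝕜 E) (x y : E) : E := (l x - l y)⁻¹ • (l x • y - l y • x)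

theorem apply_crossing : l (crossing l x y) = 0 := by
  simp only [crossing, map_smul, map_sub, smul_eq_mul]
  ring

theorem crossing_neg_swap : crossing (-l) y x = crossing l x y := by
  simp only [crossing, LinearMap.neg_apply, neg_smul, sub_neg_eq_add, neg_add_eq_sub]

variable [LinearOrder 𝕜] [IsStrictOrderedRing 𝕜]

theorem crossing_mem_segment (hx : 0 ≤ l x) (hy : l y < 0) : crossing l x y ∈ segment 𝕜 x y := by
  have hpos : 0 < l x - l y := by linarith
  refine ⟨-l y / (l x - l y), l x / (l x - l y), div_nonneg (neg_nonneg.2 hy.le) hpos.le,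
    div_nonneg hx hpos.le, ?_, ?_⟩
  · rw [← add_div, neg_add_eq_sub, div_self hpos.ne']
  · simp only [crossing, div_eq_inv_mul]
    module

theorem mem_segment_crossing {c : E} (hc : c ∈ segment 𝕜 x y) (hlc : 0 ≤ l c) (hy : l y < 0) :
    c ∈ segment 𝕜 x (crossing l x y) := by
  have hx : 0 ≤ l x := by
    by_contra! hx
    exact hlc.not_gt ((convex_halfSpace_lt l.isLinear 0).segment_subset hx hy hc)
  obtain ⟨a, b, ha, hb, hab, rfl⟩ := hc
  rw [map_add, map_smul, map_smul, smul_eq_mul, smul_eq_mul] at hlc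
  rcases hx.eq_or_lt with hx | hx
  · obtain rfl : b = 0 := by nlinarith
    obtain rfl : a = 1 := by simpa using hab
    simp [left_mem_segment]
  · have hpos : 0 < l x - l y := by linarith
    refine ⟨1 - b * (l x - l y) / l x, b * (l x - l y) / l x, ?_, by positivity, by ring, ?_⟩
    · rw [sub_nonneg, div_le_one hx]
      obtain rfl : a = 1 - b := by linarith
      linarith
    · obtain rfl : a = 1 - b := by linarith
      simp only [crossing]
      match_scalars <;> field_simp
      ring

/- `crossing l · y` is the central projection from `y` to `l = 0`, which preserves segments. -/
theorem convex_setOf_crossing_mem {K : Set E} (hK : Convex 𝕜 K) (l : Module.Dual 𝕜 E) (y : E) :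
    Convex 𝕜 {x | l y < l x ∧ crossing l x y ∈ K} := by
  rintro x₁ ⟨hx₁, hK₁⟩ x₂ ⟨hx₂, hK₂⟩ a b ha hb hab
  have hd₁ : 0 < l x₁ - l y := sub_pos.2 hx₁
  have hd₂ : 0 < l x₂ - l y := sub_pos.2 hx₂
  have hd : l (a • x₁ + b • x₂) - l y = a * (l x₁ - l y) + b * (l x₂ - l y) := by
    obtain rfl : a = 1 - b := by linarith
    simp only [map_add, map_smul, smul_eq_mul]
    ring
  have hpos : 0 < a * (l x₁ - l y) + b * (l x₂ - l y) := by
    rcases ha.eq_or_lt with rfl | ha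
    · simpa [show b = 1 by simpa using hab] using hx₂
    · exact add_pos_of_pos_of_nonneg (mul_pos ha hd₁) (mul_nonneg hb hd₂.le)
  refine ⟨sub_pos.1 (hd ▸ hpos), ?_⟩
  convert hK hK₁ hK₂
    (a := a * (l x₁ - l y) / (a * (l x₁ - l y) + b * (l x₂ - l y)))
    (b := b * (l x₂ - l y) / (a * (l x₁ - l y) + b * (l x₂ - l y)))
    (by positivity) (by positivity) (by rw [← add_div, div_self hpos.ne']) using 1
  rw [crossing, hd]
  simp only [crossing, map_add, map_smul, smul_eq_mul]
  match_scalars <;> field_simp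

theorem crossing_mem_convexHull_image2 {P N : Set E} (hPN : ∀ x ∈ P, ∀ y ∈ N, l y < l x)
    (hx : x ∈ convexHull 𝕜 P) (hy : y ∈ convexHull 𝕜 N) :
    crossing l x y ∈ convexHull 𝕜 (Set.image2 (crossing l) P N) := by
  have hleft : ∀ v ∈ N, l v < l x ∧ crossing l x v ∈ convexHull 𝕜 (Set.image2 (crossing l) P N) :=
    fun v hv => convexHull_min (t := {x | l v < l x ∧ crossing l x v ∈ _})
      (fun u hu => ⟨hPN u hu v hv, subset_convexHull 𝕜 _ (Set.mem_image2_of_mem hu hv)⟩)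
      (convex_setOf_crossing_mem (convex_convexHull 𝕜 _) l v) hx
  have hright := convexHull_min (t := {v | (-l) x < (-l) v ∧ crossing (-l) v x ∈ _})
    (fun v hv => ⟨neg_lt_neg (hleft v hv).1, crossing_neg_swap (l := l) ▸ (hleft v hv).2⟩)
    (convex_setOf_crossing_mem (convex_convexHull 𝕜 _) (-l) x) hy
  exact crossing_neg_swap (l := l) ▸ hright.2

theorem exists_convexHull_eq_inter_halfSpace (F : Finset E) (l : Module.Dual 𝕜 E) :
    ∃ F' : Finset E, convexHull 𝕜 (F' : Set E) = convexHull 𝕜 (F : Set E) ∩ {x | 0 ≤ l x} := by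
  let P := F.filter (0 ≤ l ·)
  let N := F.filter (¬ 0 ≤ l ·)
  have hP : ∀ x ∈ P, 0 ≤ l x := fun x hx => (Finset.mem_filter.1 hx).2
  have hN : ∀ x ∈ N, l x < 0 := fun x hx => not_le.1 (Finset.mem_filter.1 hx).2
  refine ⟨P ∪ Finset.image₂ (crossing l) P N, subset_antisymm (convexHull_min ?_ <|
    (convex_convexHull 𝕜 _).inter (convex_halfSpace_ge l.isLinear 0)) ?_⟩
  · intro u hu
    rcases Finset.mem_union.1 hu with hu | hu
    · exact ⟨subset_convexHull 𝕜 _ (Finset.mem_of_mem_filter u hu), hP u hu⟩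
    · obtain ⟨x, hx, y, hy, rfl⟩ := Finset.mem_image₂.1 hu
      refine ⟨segment_subset_convexHull (Finset.mem_of_mem_filter x hx)
        (Finset.mem_of_mem_filter y hy) (crossing_mem_segment (hP x hx) (hN y hy)),
        apply_crossing.ge⟩
  · rintro c ⟨hc, hlc⟩
    rw [Finset.coe_union, Finset.coe_image₂]
    have hFPN : (F : Set E) = (P : Set E) ∪ N := by
      rw [← Finset.coe_union, Finset.filter_union_filter_not_eq]
    have hNneg : ∀ y ∈ convexHull 𝕜 (N : Set E), l y < 0 :=
      convexHull_min hN (convex_halfSpace_lt l.isLinear 0)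
    rcases (P : Set E).eq_empty_or_nonempty with hP0 | hP0
    · rw [hFPN, hP0, Set.empty_union] at hc
      exact absurd hlc (hNneg c hc).not_ge
    rcases (N : Set E).eq_empty_or_nonempty with hN0 | hN0
    · rw [hFPN, hN0, Set.union_empty] at hc
      exact convexHull_mono Set.subset_union_left hc
    rw [hFPN, convexHull_union hP0 hN0] at hc
    obtain ⟨x, hx, y, hy, hxy⟩ := mem_convexJoin.1 hc
    exact (convex_convexHull 𝕜 _).segment_subset (convexHull_mono Set.subset_union_left hx)
      (convexHull_mono Set.subset_union_right (crossing_mem_convexHull_image2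
        (fun u hu v hv => (hN v hv).trans_le (hP u hu)) hx hy))
      (mem_segment_crossing hxy hlc (hNneg y hy))

theorem exists_subdivision_of_constant_sign (F : Finset E) (L : Finset (Module.Dual 𝕜 E)) :
    ∃ 𝒢 : Finset (Finset E),
      (⋃ G ∈ 𝒢, convexHull 𝕜 (G : Set E)) = convexHull 𝕜 (F : Set E) ∧
      ∀ G ∈ 𝒢, ∀ l ∈ L, convexHull 𝕜 (G : Set E) ⊆ {x | 0 ≤ l x} ∨
        convexHull 𝕜 (G : Set E) ⊆ {x | l x ≤ 0} := by
  induction L using Finset.induction_on with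
  | empty => exact ⟨{F}, by simp, by simp⟩
  | insert l L _ ih =>
    obtain ⟨𝒢, hcover, hsign⟩ := ih
    choose cut hcut using fun G => exists_convexHull_eq_inter_halfSpace (𝕜 := 𝕜) (E := E) G
    refine ⟨𝒢.image (cut · l) ∪ 𝒢.image (cut · (-l)), ?_, ?_⟩
    · simp only [Finset.set_biUnion_union, Finset.set_biUnion_finset_image, hcut,
        ← Set.iUnion₂_inter, hcover, ← Set.inter_union_distrib_left]
      refine Set.inter_eq_left.2 fun x _ => ?_
      simpa using le_total 0 (l x)
    · simp only [Finset.forall_mem_union, Finset.forall_mem_image, Finset.forall_mem_insert, hcut]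
      refine ⟨fun G hG => ⟨.inl Set.inter_subset_right, fun l' hl' => ?_⟩,
        fun G hG => ⟨.inr (Set.inter_subset_right.trans fun x hx => ?_), fun l' hl' => ?_⟩⟩
      · exact (hsign G hG l' hl').imp Set.inter_subset_left.trans Set.inter_subset_left.trans
      · simpa using hx
      · exact (hsign G hG l' hl').imp Set.inter_subset_left.trans Set.inter_subset_left.trans

end PolytopeSubdivision

section CVaR

variable {ι κ : Type*} [Fintype ι] {α : ℝ} {p v : ι → ℝ}

/-- The Rockafellar–Uryasev objective `η + (1 - α)⁻¹ E[(V - η)⁺]`, whose infimum over `η` is the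
conditional value-at-risk of `V`. -/
noncomputable def ruObjective (α : ℝ) (p v : ι → ℝ) (η : ℝ) : ℝ :=
  η + (1 - α)⁻¹ * ∑ s, p s * max (v s - η) 0

theorem exists_quantile (hp : p ∈ stdSimplex ℝ ι) {β : ℝ} (hβ : β ∈ Set.Icc 0 1) (v : ι → ℝ) :
    ∃ i, ∑ s with v i < v s, p s ≤ β ∧ β ≤ ∑ s with v i ≤ v s, p s := by
  have hι : Nonempty ι := by
    by_contra! hempty
    simpa using hp.2
  obtain ⟨top, htop⟩ := Finite.exists_max v
  have hne : (Finset.univ.filter fun i => ∑ s with v i < v s, p s ≤ β).Nonempty :=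
    ⟨top, by simpa [Finset.filter_false_of_mem fun s _ => (htop s).not_gt] using hβ.1⟩
  obtain ⟨i, hi, hmin⟩ := Finset.exists_min_image _ v hne
  simp only [Finset.mem_filter, Finset.mem_univ, true_and] at hi hmin
  refine ⟨i, hi, ?_⟩
  rcases (Finset.univ.filter fun j => v j < v i).eq_empty_or_nonempty with hnone | hsome
  · have hall : ∀ s ∈ Finset.univ, v i ≤ v s := fun s hs =>
      not_lt.1 (Finset.filter_eq_empty_iff.1 hnone hs)
    rw [Finset.filter_true_of_mem hall, hp.2]
    exact hβ.2
  · obtain ⟨j, hj, hmax⟩ := Finset.exists_max_image _ v hsome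
    simp only [Finset.mem_filter, Finset.mem_univ, true_and] at hj hmax
    have htail : ∀ s, v i ≤ v s ↔ v j < v s := fun s =>
      ⟨hj.trans_le, fun hs => not_lt.1 fun hlt => (hmax s hlt).not_gt hs⟩
    simp only [htail]
    exact (not_le.1 fun hle => (hmin j hle).not_gt hj).le

theorem sum_excess_le (hp : 0 ≤ p) (A : Finset ι) {t : ℝ} (hlt : ∀ s, t < v s → s ∈ A)
    (hle : ∀ s ∈ A, t ≤ v s) (η : ℝ) :
    ∑ s, p s * max (v s - t) 0 ≤ ∑ s, p s * max (v s - η) 0 + (η - t) * ∑ s ∈ A, p s := by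
  have hterm : ∀ s, p s * max (v s - t) 0 ≤
      p s * max (v s - η) 0 + if s ∈ A then (η - t) * p s else 0 := by
    intro s
    split_ifs with hs
    · have := mul_le_mul_of_nonneg_left (le_max_left (v s - η) 0) (hp s)
      rw [max_eq_left (sub_nonneg.2 (hle s hs))]
      linarith
    · rw [max_eq_right (sub_nonpos.2 (not_lt.1 (mt (hlt s) hs))), mul_zero, add_zero]
      exact mul_nonneg (hp s) (le_max_right _ _)
  simpa [Finset.sum_add_distrib, Finset.mul_sum] using
    Finset.sum_le_sum fun s (_ : s ∈ Finset.univ) => hterm s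

theorem ruObjective_quantile_le (hα : α < 1) (hp : 0 ≤ p) {i : ι}
    (hlt : ∑ s with v i < v s, p s ≤ 1 - α) (hle : 1 - α ≤ ∑ s with v i ≤ v s, p s) (η : ℝ) :
    ruObjective α p v (v i) ≤ ruObjective α p v η := by
  have hβ : 0 < 1 - α := sub_pos.2 hα
  have hexcess : ∑ s, p s * max (v s - v i) 0 ≤
      ∑ s, p s * max (v s - η) 0 + (η - v i) * (1 - α) := by
    rcases le_total (v i) η with hη | hη
    · refine (sum_excess_le hp {s | v i < v s} (by simp)
        (by simp +contextual [le_of_lt]) η).trans ?_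
      gcongr
    · refine (sum_excess_le hp {s | v i ≤ v s} (by simp +contextual [le_of_lt])
        (by simp) η).trans ?_
      gcongr _ + ?_
      exact mul_le_mul_of_nonpos_left hle (sub_nonpos.2 hη)
  have hscaled := mul_le_mul_of_nonneg_left hexcess (inv_pos.2 hβ).le
  rw [mul_add, mul_left_comm, inv_mul_cancel₀ hβ.ne', mul_one] at hscaled
  unfold ruObjective
  linarith

theorem cvar_eq_ruObjective_of_forall_le {t : ℝ}
    (ht : ∀ η, ruObjective α p v t ≤ ruObjective α p v η) : CVaR α p v = ruObjective α p v t :=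
  IsLeast.csInf_eq ⟨⟨t, rfl⟩, by rintro _ ⟨η, rfl⟩; exact ht η⟩

theorem exists_forall_ruObjective_le (hα : α ∈ Set.Ico (0 : ℝ) 1) (hp : p ∈ stdSimplex ℝ ι)
    (v : ι → ℝ) : ∃ i, ∀ η, ruObjective α p v (v i) ≤ ruObjective α p v η := by
  obtain ⟨i, hlt, hle⟩ := exists_quantile hp (β := 1 - α)
    ⟨sub_nonneg.2 hα.2.le, sub_le_self 1 hα.1⟩ v
  exact ⟨i, ruObjective_quantile_le hα.2 hp.1 hlt hle⟩

theorem exists_cvar_eq_ruObjective (hα : α ∈ Set.Ico (0 : ℝ) 1) (hp : p ∈ stdSimplex ℝ ι)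
    (v : ι → ℝ) : ∃ i, CVaR α p v = ruObjective α p v (v i) :=
  (exists_forall_ruObjective_le hα hp v).imp fun _ => cvar_eq_ruObjective_of_forall_le

theorem cvar_le_ruObjective (hα : α ∈ Set.Ico (0 : ℝ) 1) (hp : p ∈ stdSimplex ℝ ι)
    (v : ι → ℝ) (η : ℝ) : CVaR α p v ≤ ruObjective α p v η := by
  obtain ⟨i, hi⟩ := exists_forall_ruObjective_le hα hp v
  exact (cvar_eq_ruObjective_of_forall_le hi).trans_le (hi η)

theorem sum_mul_ruObjective (G : Finset κ) (w : κ → ℝ) (v : κ → ι → ℝ) (η : κ → ℝ) :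
    ∑ k ∈ G, w k * ruObjective α p (v k) (η k) = ∑ k ∈ G, w k * η k +
      (1 - α)⁻¹ * ∑ s, p s * ∑ k ∈ G, w k * max (v k s - η k) 0 := by
  simp only [ruObjective, mul_add, Finset.sum_add_distrib, Finset.mul_sum]
  rw [Finset.sum_comm (s := Finset.univ)]
  congr! 3
  ring

theorem cvar_sum_smul_le (hα : α ∈ Set.Ico (0 : ℝ) 1) (hp : p ∈ stdSimplex ℝ ι) {G : Finset κ}
    {w : κ → ℝ} (hw : ∀ k ∈ G, 0 ≤ w k) (v : κ → ι → ℝ) :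
    CVaR α p (∑ k ∈ G, w k • v k) ≤ ∑ k ∈ G, w k * CVaR α p (v k) := by
  have hβ : 0 ≤ (1 - α)⁻¹ := inv_nonneg.2 (sub_nonneg.2 hα.2.le)
  choose i hi using fun k => exists_cvar_eq_ruObjective hα hp (v k)
  refine (cvar_le_ruObjective hα hp _ (∑ k ∈ G, w k * v k (i k))).trans ?_
  simp only [hi, sum_mul_ruObjective]
  simp only [ruObjective, Finset.sum_apply, Pi.smul_apply, smul_eq_mul]
  gcongr with s
  · exact hp.1 s
  rw [← Finset.sum_sub_distrib]
  refine max_le (Finset.sum_le_sum fun k hk => ?_)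
    (Finset.sum_nonneg fun k hk => mul_nonneg (hw k hk) (le_max_right _ _))
  rw [← mul_sub]
  exact mul_le_mul_of_nonneg_left (le_max_left _ _) (hw k hk)

theorem max_sum_mul_zero {G : Finset κ} {w u : κ → ℝ} (hw : ∀ k ∈ G, 0 ≤ w k)
    (hu : (∀ k ∈ G, 0 ≤ u k) ∨ ∀ k ∈ G, u k ≤ 0) :
    max (∑ k ∈ G, w k * u k) 0 = ∑ k ∈ G, w k * max (u k) 0 := by
  rcases hu with hu | hu
  · rw [max_eq_left (Finset.sum_nonneg fun k hk => mul_nonneg (hw k hk) (hu k hk))]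
    exact Finset.sum_congr rfl fun k hk => by rw [max_eq_left (hu k hk)]
  · rw [max_eq_right
      (Finset.sum_nonpos fun k hk => mul_nonpos_of_nonneg_of_nonpos (hw k hk) (hu k hk))]
    exact (Finset.sum_eq_zero fun k hk => by rw [max_eq_right (hu k hk), mul_zero]).symm

theorem cvar_sum_smul_of_comonotone (hα : α ∈ Set.Ico (0 : ℝ) 1) (hp : p ∈ stdSimplex ℝ ι)
    {G : Finset κ} {w : κ → ℝ} (hw : ∀ k ∈ G, 0 ≤ w k) {v : κ → ι → ℝ}
    (hv : ∀ i j, (∀ k ∈ G, 0 ≤ v k i - v k j) ∨ ∀ k ∈ G, v k i - v k j ≤ 0) :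
    CVaR α p (∑ k ∈ G, w k • v k) = ∑ k ∈ G, w k * CVaR α p (v k) := by
  refine (cvar_sum_smul_le hα hp hw v).antisymm ?_
  obtain ⟨i, hi⟩ := exists_cvar_eq_ruObjective hα hp (∑ k ∈ G, w k • v k)
  calc ∑ k ∈ G, w k * CVaR α p (v k)
      ≤ ∑ k ∈ G, w k * ruObjective α p (v k) (v k i) := Finset.sum_le_sum fun k hk =>
        mul_le_mul_of_nonneg_left (cvar_le_ruObjective hα hp _ _) (hw k hk)
    _ = ruObjective α p (∑ k ∈ G, w k • v k) ((∑ k ∈ G, w k • v k) i) := by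
        rw [sum_mul_ruObjective]
        simp only [← max_sum_mul_zero hw (hv _ i), ruObjective, Finset.sum_apply, Pi.smul_apply,
          smul_eq_mul, mul_sub, Finset.sum_sub_distrib]
    _ = CVaR α p (∑ k ∈ G, w k • v k) := hi.symm

theorem cvar_le_iff (hα : α ∈ Set.Ico (0 : ℝ) 1) (hp : p ∈ stdSimplex ℝ ι) {r : ℝ} :
    CVaR α p v ≤ r ↔ ∃ (η : ℝ) (t : ι → ℝ), 0 ≤ t ∧ (∀ s, v s - η ≤ t s) ∧
      η + (1 - α)⁻¹ * ∑ s, p s * t s ≤ r := by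
  constructor
  · intro hr
    obtain ⟨i, hi⟩ := exists_cvar_eq_ruObjective hα hp v
    exact ⟨v i, fun s => max (v s - v i) 0, fun s => le_max_right _ _, fun s => le_max_left _ _,
      hi.symm.trans_le hr⟩
  · rintro ⟨η, t, ht, hle, hr⟩
    refine ((cvar_le_ruObjective hα hp v η).trans ?_).trans hr
    have hβ : 0 ≤ (1 - α)⁻¹ := inv_nonneg.2 (sub_nonneg.2 hα.2.le)
    unfold ruObjective
    gcongr with s
    · exact hp.1 s
    · exact max_le (hle s) (ht s)

end CVaR

section FiniteGeneration

variable {ι κ E : Type*} [Fintype ι] [Fintype κ] [AddCommGroup E] [Module ℝ E]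

/-- The points `c k` of `C` generate the graph of `R` over `C`: each pair `(e, R e)` with `e ∈ C`
is a nonnegative combination of the pairs `(c k, R (c k))`. A constraint or a measure on `C` that
enters a problem only through its pairing with such graphs can then be moved to the `c k`. -/
structure GeneratesGraph (C : Set E) (R : E → ℝ) (c : κ → E) : Prop where
  mem : ∀ k, c k ∈ C
  exists_weights : ∀ e ∈ C, ∃ w : κ → ℝ, 0 ≤ w ∧ ∑ k, w k • c k = e ∧ ∑ k, w k * R (c k) = R e

theorem sum_ite_mem_equivFin {T M : Type*} [AddCommMonoid M] {U V : Finset T} (h : U ⊆ V)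
    (f : T → M) :
    ∑ k, (if (V.equivFin.symm k : T) ∈ U then f (V.equivFin.symm k) else 0) = ∑ u ∈ U, f u := by
  rw [V.equivFin.symm.sum_comp (fun u : V => if (u : T) ∈ U then f u else 0),
    V.sum_coe_sort (fun u => if u ∈ U then f u else 0), Finset.sum_ite_mem,
    Finset.inter_eq_right.2 h]

/- On a cell where every `X i - X j` has constant sign, the random variables `X · u` are comonotone,
so the conditional value-at-risk is additive there. -/
theorem exists_generatesGraph_cvar {α : ℝ} {p : ι → ℝ} (hα : α ∈ Set.Ico (0 : ℝ) 1)
    (hp : p ∈ stdSimplex ℝ ι) (X : ι → Module.Dual ℝ E) (F : Finset E) :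
    ∃ (K : ℕ) (c : Fin K → E),
      GeneratesGraph (convexHull ℝ (F : Set E)) (fun e => CVaR α p fun i => X i e) c := by
  obtain ⟨𝒢, hcover, hsign⟩ := exists_subdivision_of_constant_sign F
    (Finset.univ.image fun ij : ι × ι => X ij.1 - X ij.2)
  let V := 𝒢.biUnion id
  have hGV : ∀ G ∈ 𝒢, G ⊆ V := fun G hG => Finset.subset_biUnion_of_mem id hG
  refine ⟨V.card, fun k => V.equivFin.symm k, fun k => ?_, fun e he => ?_⟩
  · obtain ⟨G, hG, hk⟩ := Finset.mem_biUnion.1 (V.equivFin.symm k).2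
    exact hcover.subset (Set.mem_biUnion hG (subset_convexHull ℝ _ hk))
  · obtain ⟨G, hG, heG⟩ := Set.mem_iUnion₂.1 (hcover.symm.subset he)
    obtain ⟨w, hw, -, rfl⟩ := Finset.mem_convexHull'.1 heG
    have hcomonotone : ∀ i j, (∀ u ∈ G, 0 ≤ X i u - X j u) ∨ ∀ u ∈ G, X i u - X j u ≤ 0 := by
      intro i j
      exact (hsign G hG (X i - X j) (Finset.mem_image_of_mem _ (Finset.mem_univ (i, j)))).imp
        (fun h u hu => h (subset_convexHull ℝ _ hu)) (fun h u hu => h (subset_convexHull ℝ _ hu))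
    have hadd := cvar_sum_smul_of_comonotone hα hp hw (v := fun u i => X i u) hcomonotone
    refine ⟨fun k => if (V.equivFin.symm k : E) ∈ G then w (V.equivFin.symm k) else 0,
      fun k => ?_, ?_, ?_⟩
    · dsimp only
      split_ifs with hk
      exacts [hw _ hk, le_rfl]
    · simp only [ite_smul, zero_smul]
      exact sum_ite_mem_equivFin (hGV G hG) fun u => w u • u
    · simp only [ite_mul, zero_mul]
      rw [sum_ite_mem_equivFin (hGV G hG) fun u => w u * CVaR α p fun i => X i u, ← hadd]
      congr 1
      ext i
      simp

theorem GeneratesGraph.forall_cvar_le_iff {α : ℝ} {p : ι → ℝ} {C : Set E} {R : E → ℝ} {c : κ → E}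
    (hc : GeneratesGraph C R c) (hα : α ∈ Set.Ico (0 : ℝ) 1) (hp : p ∈ stdSimplex ℝ ι)
    (X : ι → Module.Dual ℝ E) :
    (∀ e ∈ C, CVaR α p (fun i => X i e) ≤ R e) ↔ ∀ k, CVaR α p (fun i => X i (c k)) ≤ R (c k) := by
  refine ⟨fun h k => h _ (hc.mem k), fun h e he => ?_⟩
  obtain ⟨w, hw, rfl, hR⟩ := hc.exists_weights e he
  calc CVaR α p (fun i => X i (∑ k, w k • c k))
      = CVaR α p (∑ k, w k • fun i => X i (c k)) := by
        congr 1
        ext i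
        simp
    _ ≤ ∑ k, w k * CVaR α p (fun i => X i (c k)) := cvar_sum_smul_le hα hp (fun k _ => hw k) _
    _ ≤ ∑ k, w k * R (c k) := by
        gcongr with k
        exacts [hw k, h k]
    _ = R (∑ k, w k • c k) := hR

end FiniteGeneration

section CVaRConstrainedLP

variable {ι ρ S κ : Type*} [Fintype S] [Fintype κ] {α : ℝ} {p : S → ℝ}
  {B : Matrix ρ ι ℝ} {β : ρ → ℝ} {γ : ι → ℝ} {G : S → Matrix κ ι ℝ} {R : κ → ℝ}

/-- Feasibility for the linear program `B x ≥ β`, `x ≥ 0` with the additional risk constraints that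
the random variable `s ↦ (G s x)ₖ` has conditional value-at-risk at most `R k`. -/
structure CVaRFeasible [Fintype ι] (α : ℝ) (p : S → ℝ) (B : Matrix ρ ι ℝ) (β : ρ → ℝ)
    (G : S → Matrix κ ι ℝ) (R : κ → ℝ) (x : ι → ℝ) : Prop where
  nonneg : 0 ≤ x
  le_mulVec : β ≤ B *ᵥ x
  cvar_le : ∀ k, CVaR α p (fun s => (G s *ᵥ x) k) ≤ R k

/-- Feasibility for the dual of the program of `CVaRFeasible` with cost `γ`: `μ k` prices the
`k`-th risk constraint, and `ν s k / μ k` is a density from the dual description of the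
conditional value-at-risk. -/
structure CVaRDualFeasible [Fintype ρ] (α : ℝ) (p : S → ℝ) (B : Matrix ρ ι ℝ) (γ : ι → ℝ)
    (G : S → Matrix κ ι ℝ) (y : ρ → ℝ) (μ : κ → ℝ) (ν : S → κ → ℝ) : Prop where
  nonneg : 0 ≤ y
  price_nonneg : 0 ≤ μ
  density_nonneg : 0 ≤ ν
  sum_density : ∑ s, p s • ν s = μ
  density_le : ∀ s k, ν s k ≤ μ k / (1 - α)
  le_cost : y ᵥ* B - ∑ s, p s • (ν s ᵥ* G s) ≤ γ

theorem CVaRDualFeasible.vecMul {κ₀ : Type*} [Fintype κ₀] [Fintype ρ] {W : Matrix κ₀ κ ℝ}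
    (hW : ∀ k₀ k, 0 ≤ W k₀ k) {y : ρ → ℝ} {μ : κ₀ → ℝ} {ν : S → κ₀ → ℝ}
    (h : CVaRDualFeasible α p B γ (fun s => W * G s) y μ ν) :
    CVaRDualFeasible α p B γ G y (μ ᵥ* W) (fun s => ν s ᵥ* W) where
  nonneg := h.nonneg
  price_nonneg k := dotProduct_nonneg_of_nonneg h.price_nonneg fun k₀ => hW k₀ k
  density_nonneg s k := dotProduct_nonneg_of_nonneg (h.density_nonneg s) fun k₀ => hW k₀ k
  sum_density := by simp only [← h.sum_density, ← smul_vecMul, sum_vecMul]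
  density_le s k := by
    simp only [Matrix.vecMul, dotProduct, Finset.sum_div]
    gcongr with k₀
    rw [mul_div_right_comm]
    exact mul_le_mul_of_nonneg_right (h.density_le s k₀) (hW k₀ k)
  le_cost := by simpa only [vecMul_vecMul] using h.le_cost

/-- Constraint matrix of the program of `CVaRFeasible` after each risk constraint is replaced by
its epigraph form. The columns are `x`, the excesses `t (s, k) ≥ (G s x)ₖ - η k`, and the positive
and negative parts of `η`; the excess rows are scaled by `p s`, so that their multipliers are
densities with respect to `p`. -/
noncomputable def epigraphMatrix (α : ℝ) (p : S → ℝ) (B : Matrix ρ ι ℝ) (G : S → Matrix κ ι ℝ) :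
    Matrix (ρ ⊕ (S × κ) ⊕ κ) (ι ⊕ (S × κ) ⊕ κ ⊕ κ) ℝ :=
  Matrix.of <| Sum.elim (fun r => Sum.elim (B r) 0) <| Sum.elim
    (fun sk => Sum.elim (-p sk.1 • G sk.1 sk.2) <| Sum.elim (Pi.single sk (p sk.1)) <|
      Sum.elim (Pi.single sk.2 (p sk.1)) (Pi.single sk.2 (-p sk.1)))
    (fun k => Sum.elim 0 <| Sum.elim (fun tk => if tk.2 = k then -((1 - α)⁻¹ * p tk.1) else 0) <|
      Sum.elim (Pi.single k (-1)) (Pi.single k 1))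

theorem epigraphMatrix_mulVec [Fintype ι] (x : ι → ℝ) (t : S × κ → ℝ) (η₁ η₂ : κ → ℝ) :
    epigraphMatrix α p B G *ᵥ Sum.elim x (Sum.elim t (Sum.elim η₁ η₂)) =
      Sum.elim (B *ᵥ x) (Sum.elim
        (fun sk => p sk.1 * (t sk + (η₁ - η₂) sk.2 - (G sk.1 *ᵥ x) sk.2))
        (fun k => -((η₁ - η₂) k + (1 - α)⁻¹ * ∑ s, p s * t (s, k)))) := by
  ext (r | ⟨s, k⟩ | k)
  · simp [epigraphMatrix, mulVec, sumElim_dotProduct_sumElim]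
  · simp only [mulVec, epigraphMatrix, neg_smul, of_apply, Sum.elim_inr, Sum.elim_inl,
      sumElim_dotProduct_sumElim, neg_dotProduct, smul_dotProduct, smul_eq_mul, single_dotProduct,
      neg_mul, Pi.sub_apply]
    ring
  · have hexcess : (fun tk : S × κ => if tk.2 = k then -((1 - α)⁻¹ * p tk.1) else 0) ⬝ᵥ t =
        -((1 - α)⁻¹ * ∑ s, p s * t (s, k)) := by
      simp [dotProduct, Fintype.sum_prod_type, Finset.mul_sum, mul_assoc]
    simp only [mulVec, epigraphMatrix, of_apply, Sum.elim_inr, sumElim_dotProduct_sumElim,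
      zero_dotProduct, hexcess, single_dotProduct, neg_mul, one_mul, zero_add, Pi.sub_apply]
    ring

theorem vecMul_epigraphMatrix [Fintype ρ] (y : ρ → ℝ) (ν : S → κ → ℝ) (μ : κ → ℝ) :
    Sum.elim y (Sum.elim (Function.uncurry ν) μ) ᵥ* epigraphMatrix α p B G =
      Sum.elim (y ᵥ* B - ∑ s, p s • (ν s ᵥ* G s)) (Sum.elim
        (fun sk => p sk.1 * (ν sk.1 sk.2 - μ sk.2 / (1 - α)))
        (Sum.elim (∑ s, p s • ν s - μ) (μ - ∑ s, p s • ν s))) := by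
  ext (j | ⟨s, k⟩ | k | k)
  · simp [epigraphMatrix, vecMul, dotProduct, Fintype.sum_prod_type, Finset.mul_sum, mul_left_comm,
      sub_eq_add_neg]
  · simp only [vecMul, dotProduct, epigraphMatrix, of_apply, Fintype.sum_sum_type, Sum.elim_inl,
      Sum.elim_inr, Pi.zero_apply, mul_zero, Finset.sum_const_zero, Pi.single_apply, mul_ite,
      Finset.sum_ite_eq, Finset.mem_univ, ↓reduceIte, Function.uncurry_apply_pair, mul_neg,
      zero_add]
    ring
  · simp [epigraphMatrix, vecMul, dotProduct, Fintype.sum_prod_type, Pi.single_apply, mul_comm,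
      sub_eq_add_neg]
  · simp [epigraphMatrix, vecMul, dotProduct, Fintype.sum_prod_type, Pi.single_apply, mul_comm,
      sub_eq_add_neg, add_comm]

theorem cvarDualFeasible_iff_vecMul_epigraphMatrix_le [Fintype ρ] (hp : ∀ s, 0 < p s)
    {y : ρ → ℝ} {μ : κ → ℝ} {ν : S → κ → ℝ} :
    CVaRDualFeasible α p B γ G y μ ν ↔ 0 ≤ Sum.elim y (Sum.elim (Function.uncurry ν) μ) ∧
      Sum.elim y (Sum.elim (Function.uncurry ν) μ) ᵥ* epigraphMatrix α p B G ≤ Sum.elim γ 0 := by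
  rw [vecMul_epigraphMatrix]
  constructor
  · rintro ⟨hy, hμ, hν, hsum, hle, hcost⟩
    constructor
    · rintro (r | ⟨s, k⟩ | k)
      exacts [hy r, hν s k, hμ k]
    · rintro (j | ⟨s, k⟩ | k | k)
      · exact hcost j
      · exact mul_nonpos_of_nonneg_of_nonpos (hp s).le (sub_nonpos.2 (hle s k))
      · exact (congr_fun (sub_eq_zero.2 hsum) k).le
      · exact (congr_fun (sub_eq_zero.2 hsum.symm) k).le
  · rintro ⟨hnonneg, hle⟩
    exact {
      nonneg := fun r => hnonneg (.inl r)
      price_nonneg := fun k => hnonneg (.inr (.inr k))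
      density_nonneg := fun s k => hnonneg (.inr (.inl (s, k)))
      sum_density := le_antisymm (fun k => sub_nonpos.1 (hle (.inr (.inr (.inl k)))))
        fun k => sub_nonpos.1 (hle (.inr (.inr (.inr k))))
      density_le := fun s k => sub_nonpos.1
        (nonpos_of_mul_nonpos_right (hle (.inr (.inl (s, k)))) (hp s))
      le_cost := fun j => hle (.inl j) }

variable [Fintype ι]

theorem cvarFeasible_iff_exists_epigraph (hα : α ∈ Set.Ico (0 : ℝ) 1) (hp : ∀ s, 0 < p s)
    (hp1 : ∑ s, p s = 1) {x : ι → ℝ} :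
    CVaRFeasible α p B β G R x ↔ ∃ u, 0 ≤ Sum.elim x u ∧
      Sum.elim β (Sum.elim 0 (-R)) ≤ epigraphMatrix α p B G *ᵥ Sum.elim x u := by
  have hsimplex : p ∈ stdSimplex ℝ S := ⟨fun s => (hp s).le, hp1⟩
  constructor
  · rintro ⟨hx, hB, hR⟩
    choose η t ht hle hηR using fun k => (cvar_le_iff hα hsimplex).1 (hR k)
    refine ⟨Sum.elim (fun sk => t sk.2 sk.1) (Sum.elim (η⁺) (η⁻)), ?_, ?_⟩
    · rintro (i | ⟨s, k⟩ | k | k)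
      exacts [hx i, ht k s, posPart_nonneg (η k), negPart_nonneg (η k)]
    · rw [epigraphMatrix_mulVec, posPart_sub_negPart]
      rintro (r | ⟨s, k⟩ | k)
      · exact hB r
      · exact mul_nonneg (hp s).le (by linarith [hle k s])
      · exact neg_le_neg (hηR k)
  · rintro ⟨u, hu, hM⟩
    obtain ⟨t, η₁, η₂, rfl⟩ : ∃ t η₁ η₂, u = Sum.elim t (Sum.elim η₁ η₂) :=
      ⟨u ∘ .inl, u ∘ .inr ∘ .inl, u ∘ .inr ∘ .inr, by ext (_ | _ | _) <;> rfl⟩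
    rw [epigraphMatrix_mulVec] at hM
    refine ⟨fun i => hu (.inl i), fun r => hM (.inl r), fun k => (cvar_le_iff hα hsimplex).2
      ⟨(η₁ - η₂) k, fun s => t (s, k), fun s => hu (.inr (.inl (s, k))), fun s => ?_,
        neg_le_neg_iff.1 (hM (.inr (.inr k)))⟩⟩
    have := (mul_nonneg_iff_of_pos_left (hp s)).1 (hM (.inr (.inl (s, k))))
    linarith

theorem isGLB_cvarFeasible_iff_isLUB_cvarDualFeasible [Fintype ρ] (hα : α ∈ Set.Ico (0 : ℝ) 1)
    (hp : ∀ s, 0 < p s) (hp1 : ∑ s, p s = 1) {v : ℝ} :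
    IsGLB ((γ ⬝ᵥ ·) '' {x | CVaRFeasible α p B β G R x}) v ↔
      IsLUB {v | ∃ y μ ν, CVaRDualFeasible α p B γ G y μ ν ∧ v = y ⬝ᵥ β - μ ⬝ᵥ R} v := by
  have hprimal : (γ ⬝ᵥ ·) '' {x | CVaRFeasible α p B β G R x} = (Sum.elim γ 0 ⬝ᵥ ·) ''
      {x | 0 ≤ x ∧ Sum.elim β (Sum.elim 0 (-R)) ≤ epigraphMatrix α p B G *ᵥ x} := by
    ext r
    constructor
    · rintro ⟨x, hx, rfl⟩
      obtain ⟨u, hu⟩ := (cvarFeasible_iff_exists_epigraph hα hp hp1).1 hx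
      exact ⟨Sum.elim x u, hu, by simp [sumElim_dotProduct_sumElim]⟩
    · rintro ⟨xu, hxu, rfl⟩
      obtain ⟨x, u, rfl⟩ : ∃ x u, xu = Sum.elim x u := ⟨_, _, (Sum.elim_comp_inl_inr xu).symm⟩
      exact ⟨x, (cvarFeasible_iff_exists_epigraph hα hp hp1).2 ⟨u, hxu⟩,
        by simp [sumElim_dotProduct_sumElim]⟩
  have hdual : {v | ∃ y μ ν, CVaRDualFeasible α p B γ G y μ ν ∧ v = y ⬝ᵥ β - μ ⬝ᵥ R} =
      (· ⬝ᵥ Sum.elim β (Sum.elim 0 (-R))) ''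
        {y | 0 ≤ y ∧ y ᵥ* epigraphMatrix α p B G ≤ Sum.elim γ 0} := by
    ext r
    constructor
    · rintro ⟨y, μ, ν, h, rfl⟩
      exact ⟨_, (cvarDualFeasible_iff_vecMul_epigraphMatrix_le hp).1 h,
        by simp [sumElim_dotProduct_sumElim, sub_eq_add_neg]⟩
    · rintro ⟨Y, hY, rfl⟩
      obtain ⟨y, ν, μ, rfl⟩ : ∃ y ν μ, Y = Sum.elim y (Sum.elim (Function.uncurry ν) μ) :=
        ⟨Y ∘ .inl, fun s k => Y (.inr (.inl (s, k))), Y ∘ .inr ∘ .inr,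
          by ext (_ | _ | _) <;> rfl⟩
      exact ⟨y, μ, ν, (cvarDualFeasible_iff_vecMul_epigraphMatrix_le hp).2 hY,
        by simp [sumElim_dotProduct_sumElim, sub_eq_add_neg]⟩
  rw [hprimal, hdual]
  exact isGLB_primal_iff_isLUB_dual

end CVaRConstrainedLP

section TwoStageMatrices

variable {S ι₁ ι₂ ρ₁ ρ₂ δ : Type*} [Fintype S]

/-- The matrix acting as `M` on the `s`-th block of `S × ι₂` and as zero on the other blocks. -/
noncomputable def scenarioMatrix (s : S) (M : Matrix ρ₂ ι₂ ℝ) : Matrix ρ₂ (S × ι₂) ℝ :=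
  Matrix.of fun i sj => if sj.1 = s then M i sj.2 else 0

theorem scenarioMatrix_mulVec [Fintype ι₂] (s : S) (M : Matrix ρ₂ ι₂ ℝ) (y : S → ι₂ → ℝ) :
    scenarioMatrix s M *ᵥ Function.uncurry y = M *ᵥ y s := by
  ext i
  simp [scenarioMatrix, mulVec, dotProduct, Fintype.sum_prod_type_right]

/-- Constraint matrix of the two-stage system `-A x ≥ -b`, `p s (T s x + W s (y s)) ≥ p s h s`. The
scaling by `p s` makes the multipliers of the second-stage rows densities with respect to `p`. -/
noncomputable def twoStageMatrix (p : S → ℝ) (A : Matrix ρ₁ ι₁ ℝ) (T : S → Matrix ρ₂ ι₁ ℝ)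
    (W : S → Matrix ρ₂ ι₂ ℝ) : Matrix (ρ₁ ⊕ S × ρ₂) (ι₁ ⊕ S × ι₂) ℝ :=
  fromRows (fromCols (-A) 0)
    (Matrix.of fun si => p si.1 • fromCols (T si.1) (scenarioMatrix si.1 (W si.1)) si.2)

/-- Right-hand side of the two-stage system of `twoStageMatrix`. -/
noncomputable def twoStageBound (p : S → ℝ) (b : ρ₁ → ℝ) (h : S → ρ₂ → ℝ) : ρ₁ ⊕ S × ρ₂ → ℝ :=
  Sum.elim (-b) fun si => p si.1 * h si.1 si.2

/-- Expected cost vector of a two-stage decision `(x, y)`: `f` for `x` and `p s q s` for `y s`. -/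
noncomputable def twoStageCost (p : S → ℝ) (f : ι₁ → ℝ) (q : S → ι₂ → ℝ) : ι₁ ⊕ S × ι₂ → ℝ :=
  Sum.elim f fun sj => p sj.1 * q sj.1 sj.2

/-- The matrix taking a two-stage decision `(x, y)` to its outcome `g s x + g' s (y s)`. -/
noncomputable def outcomeMatrix (g : S → Matrix δ ι₁ ℝ) (g' : S → Matrix δ ι₂ ℝ) (s : S) :
    Matrix δ (ι₁ ⊕ S × ι₂) ℝ :=
  fromCols (g s) (scenarioMatrix s (g' s))

theorem twoStageMatrix_mulVec [Fintype ι₁] [Fintype ι₂] (p : S → ℝ) (A : Matrix ρ₁ ι₁ ℝ)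
    (T : S → Matrix ρ₂ ι₁ ℝ) (W : S → Matrix ρ₂ ι₂ ℝ) (x : ι₁ → ℝ) (y : S → ι₂ → ℝ) :
    twoStageMatrix p A T W *ᵥ Sum.elim x (Function.uncurry y) =
      Sum.elim (-(A *ᵥ x)) fun si => p si.1 * (T si.1 *ᵥ x + W si.1 *ᵥ y si.1) si.2 := by
  rw [twoStageMatrix, fromRows_mulVec, fromCols_mulVec_sumElim, neg_mulVec, zero_mulVec, add_zero]
  congr 1
  ext ⟨s, i⟩
  rw [← scenarioMatrix_mulVec s (W s), ← fromCols_mulVec_sumElim]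
  exact smul_dotProduct (p s) (fromCols (T s) (scenarioMatrix s (W s)) i) _

theorem outcomeMatrix_mulVec [Fintype ι₁] [Fintype ι₂] (g : S → Matrix δ ι₁ ℝ)
    (g' : S → Matrix δ ι₂ ℝ) (s : S) (x : ι₁ → ℝ) (y : S → ι₂ → ℝ) :
    outcomeMatrix g g' s *ᵥ Sum.elim x (Function.uncurry y) = g s *ᵥ x + g' s *ᵥ y s := by
  rw [outcomeMatrix, fromCols_mulVec_sumElim, scenarioMatrix_mulVec]

theorem vecMul_twoStageMatrix [Fintype ρ₁] [Fintype ρ₂] (p : S → ℝ) (A : Matrix ρ₁ ι₁ ℝ)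
    (T : S → Matrix ρ₂ ι₁ ℝ) (W : S → Matrix ρ₂ ι₂ ℝ) (lam : ρ₁ → ℝ) (π : S → ρ₂ → ℝ) :
    Sum.elim lam (Function.uncurry π) ᵥ* twoStageMatrix p A T W =
      Sum.elim (-(lam ᵥ* A) + ∑ s, p s • (π s ᵥ* T s)) fun sj =>
        p sj.1 * (π sj.1 ᵥ* W sj.1) sj.2 := by
  rw [twoStageMatrix, sumElim_vecMul_fromRows]
  ext (j | ⟨s, j⟩)
  · simp [vecMul, dotProduct, Fintype.sum_prod_type, Finset.mul_sum, mul_left_comm]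
  · simp [scenarioMatrix, vecMul, dotProduct, Fintype.sum_prod_type_right, Finset.mul_sum,
      mul_left_comm]

theorem sum_smul_vecMul_outcomeMatrix [Fintype δ] (p : S → ℝ) (g : S → Matrix δ ι₁ ℝ)
    (g' : S → Matrix δ ι₂ ℝ) (ν : S → δ → ℝ) :
    ∑ s, p s • (ν s ᵥ* outcomeMatrix g g' s) =
      Sum.elim (∑ s, p s • (ν s ᵥ* g s)) fun sj => p sj.1 * (ν sj.1 ᵥ* g' sj.1) sj.2 := by
  simp only [outcomeMatrix, vecMul_fromCols]
  ext (j | ⟨s, j⟩)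
  · simp
  · simp [scenarioMatrix, vecMul, dotProduct]

end TwoStageMatrices

section TwoStageDuality

variable {m m1 m2 n1 n2 d τ K : ℕ} {α : ℝ} {p : Fin m → ℝ} {A : Matrix (Fin m1) (Fin n1) ℝ}
  {b : Fin m1 → ℝ} {fv : Fin n1 → ℝ} {Tm : Fin m → Matrix (Fin m2) (Fin n1) ℝ}
  {Wm : Fin m → Matrix (Fin m2) (Fin n2) ℝ} {q : Fin m → Fin n2 → ℝ} {hvec : Fin m → Fin m2 → ℝ}
  {gbar : Fin m → Matrix (Fin d) (Fin n1) ℝ} {gtil : Fin m → Matrix (Fin d) (Fin n2) ℝ}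
  {z : Fin τ → Fin d → ℝ} {pt : Fin τ → ℝ} {C : Set (Fin d → ℝ)} {c : Fin K → Fin d → ℝ}
  {x : Fin n1 → ℝ} {y : Fin m → Fin n2 → ℝ} {mw : Fin K → ℝ} {nw : Fin m → Fin K → ℝ}
  {lam : Fin m1 → ℝ} {piv : Fin m → Fin m2 → ℝ}

theorem inXY_iff_le_twoStageMatrix_mulVec (hp : ∀ s, 0 < p s) :
    InXY A b Tm Wm hvec x y ↔ 0 ≤ Sum.elim x (Function.uncurry y) ∧
      twoStageBound p b hvec ≤ twoStageMatrix p A Tm Wm *ᵥ Sum.elim x (Function.uncurry y) := by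
  rw [twoStageMatrix_mulVec]
  constructor
  · rintro ⟨hx, hA, hy⟩
    constructor
    · rintro (j | ⟨s, j⟩)
      exacts [hx j, (hy s).1 j]
    · rintro (i | ⟨s, i⟩)
      exacts [neg_le_neg (hA i), mul_le_mul_of_nonneg_left ((hy s).2 i) (hp s).le]
  · rintro ⟨hxy, hle⟩
    exact ⟨fun j => hxy (.inl j), fun i => neg_le_neg_iff.1 (hle (.inl i)),
      fun s => ⟨fun j => hxy (.inr (s, j)),
        fun i => le_of_mul_le_mul_left (hle (.inr (s, i))) (hp s)⟩⟩

theorem primalFeas_iff_cvarFeasible (hα : α ∈ Set.Ico (0 : ℝ) 1) (hp : ∀ s, 0 < p s)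
    (hp1 : ∑ s, p s = 1) (hc : GeneratesGraph C (fun e => CVaR α pt fun i => e ⬝ᵥ z i) c) :
    PrimalFeas α p A b Tm Wm hvec gbar gtil z pt C x y ↔
      CVaRFeasible α p (twoStageMatrix p A Tm Wm) (twoStageBound p b hvec)
        (fun s => of c * outcomeMatrix gbar gtil s) (fun k => CVaR α pt fun i => c k ⬝ᵥ z i)
        (Sum.elim x (Function.uncurry y)) := by
  have hrisk : (∀ e ∈ C, CVaR α p (fun s => e ⬝ᵥ Ghat gbar gtil x y s) ≤
        CVaR α pt fun i => e ⬝ᵥ z i) ↔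
      ∀ k, CVaR α p (fun s => c k ⬝ᵥ Ghat gbar gtil x y s) ≤ CVaR α pt fun i => c k ⬝ᵥ z i :=
    hc.forall_cvar_le_iff hα ⟨fun s => (hp s).le, hp1⟩ fun s =>
      (dotProductBilin ℝ ℝ).flip (Ghat gbar gtil x y s)
  have houtcome : ∀ k s, ((of c * outcomeMatrix gbar gtil s) *ᵥ Sum.elim x (Function.uncurry y)) k =
      c k ⬝ᵥ Ghat gbar gtil x y s := by
    intro k s
    rw [← mulVec_mulVec, outcomeMatrix_mulVec]
    rfl
  rw [PrimalFeas, inXY_iff_le_twoStageMatrix_mulVec hp, hrisk]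
  constructor
  · rintro ⟨⟨hnonneg, hle⟩, hcvar⟩
    exact ⟨hnonneg, hle, by simpa only [houtcome] using hcvar⟩
  · rintro ⟨hnonneg, hle, hcvar⟩
    exact ⟨⟨hnonneg, hle⟩, by simpa only [houtcome] using hcvar⟩

theorem primalObj_eq_twoStageCost_dotProduct :
    PrimalObj p fv q x y = twoStageCost p fv q ⬝ᵥ Sum.elim x (Function.uncurry y) := by
  simp [PrimalObj, twoStageCost, dotProduct, Fintype.sum_sum_type, Fintype.sum_prod_type,
    Finset.mul_sum, mul_assoc]

theorem setOf_primalObj_eq (hα : α ∈ Set.Ico (0 : ℝ) 1) (hp : ∀ s, 0 < p s)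
    (hp1 : ∑ s, p s = 1) (hc : GeneratesGraph C (fun e => CVaR α pt fun i => e ⬝ᵥ z i) c) :
    {v | ∃ x y, PrimalFeas α p A b Tm Wm hvec gbar gtil z pt C x y ∧ v = PrimalObj p fv q x y} =
      (twoStageCost p fv q ⬝ᵥ ·) '' {X | CVaRFeasible α p (twoStageMatrix p A Tm Wm)
        (twoStageBound p b hvec) (fun s => of c * outcomeMatrix gbar gtil s)
        (fun k => CVaR α pt fun i => c k ⬝ᵥ z i) X} := by
  ext v
  constructor
  · rintro ⟨x, y, h, rfl⟩
    exact ⟨_, (primalFeas_iff_cvarFeasible hα hp hp1 hc).1 h,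
      primalObj_eq_twoStageCost_dotProduct.symm⟩
  · rintro ⟨X, hX, rfl⟩
    obtain ⟨x, y, rfl⟩ : ∃ x y, X = Sum.elim x (Function.uncurry y) :=
      ⟨X ∘ .inl, fun s j => X (.inr (s, j)), by ext (_ | _) <;> rfl⟩
    exact ⟨x, y, (primalFeas_iff_cvarFeasible hα hp hp1 hc).2 hX,
      primalObj_eq_twoStageCost_dotProduct.symm⟩

theorem sum_mul_vecMul_apply {ι κ δ : Type*} [Fintype κ] [Fintype δ] (ν : κ → ℝ)
    (c : κ → δ → ℝ) (M : Matrix δ ι ℝ) (j : ι) :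
    ∑ k, ν k * (c k ᵥ* M) j = (ν ᵥ* of c ᵥ* M) j := by
  rw [vecMul_vecMul]
  rfl

theorem dualFeas_iff_cvarDualFeasible (hp : ∀ s, 0 < p s) :
    DualFeas α p A fv Tm Wm q gbar gtil C c mw nw lam piv ↔ (∀ k, c k ∈ C) ∧
      CVaRDualFeasible α p (twoStageMatrix p A Tm Wm) (twoStageCost p fv q)
        (fun s => of c * outcomeMatrix gbar gtil s) (Sum.elim lam (Function.uncurry piv)) mw
        nw := by
  have hreduced : Sum.elim lam (Function.uncurry piv) ᵥ* twoStageMatrix p A Tm Wm -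
      ∑ s, p s • (nw s ᵥ* (of c * outcomeMatrix gbar gtil s)) =
      Sum.elim (fun j => ∑ s, p s * ((piv s ᵥ* Tm s) j - ∑ k, nw s k * (c k ᵥ* gbar s) j) -
          (lam ᵥ* A) j)
        fun sj => p sj.1 * ((piv sj.1 ᵥ* Wm sj.1) sj.2 -
          ∑ k, nw sj.1 k * (c k ᵥ* gtil sj.1) sj.2) := by
    simp only [← vecMul_vecMul, sum_smul_vecMul_outcomeMatrix, vecMul_twoStageMatrix,
      sum_mul_vecMul_apply]
    ext (j | ⟨s, j⟩)
    · simp only [Pi.sub_apply, Sum.elim_inl, Pi.add_apply, Pi.neg_apply, Finset.sum_apply,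
        Pi.smul_apply, smul_eq_mul, mul_sub, Finset.sum_sub_distrib]
      ring
    · simp [mul_sub]
  constructor
  · rintro ⟨hcC, hmw, hnw, hlam, hpiv, hsum, hle, hfirst, hsecond⟩
    refine ⟨hcC, ?_, hmw, hnw, ?_, hle, ?_⟩
    · rintro (i | ⟨s, i⟩)
      exacts [hlam i, hpiv s i]
    · ext k
      simpa using hsum k
    · rw [hreduced]
      rintro (j | ⟨s, j⟩)
      exacts [sub_le_iff_le_add.2 (hfirst j), mul_le_mul_of_nonneg_left (hsecond s j) (hp s).le]
  · rintro ⟨hcC, hnonneg, hmw, hnw, hsum, hle, hcost⟩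
    rw [hreduced] at hcost
    exact ⟨hcC, hmw, hnw, fun i => hnonneg (.inl i), fun s i => hnonneg (.inr (s, i)),
      fun k => by simpa using congr_fun hsum k, hle,
      fun j => sub_le_iff_le_add.1 (hcost (.inl j)),
      fun s j => le_of_mul_le_mul_left (hcost (.inr (s, j))) (hp s)⟩

theorem dualObj_eq_dotProduct_twoStageBound_sub :
    DualObj α p b hvec z pt c mw lam piv =
      Sum.elim lam (Function.uncurry piv) ⬝ᵥ twoStageBound p b hvec -
        mw ⬝ᵥ fun k => CVaR α pt fun i => c k ⬝ᵥ z i := by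
  have hsecond : ∑ s, p s * (piv s ⬝ᵥ hvec s) =
      Function.uncurry piv ⬝ᵥ fun si => p si.1 * hvec si.1 si.2 := by
    simp only [dotProduct, Fintype.sum_prod_type, Finset.mul_sum, Function.uncurry_apply_pair,
      mul_left_comm]
  rw [DualObj, twoStageBound, sumElim_dotProduct_sumElim, dotProduct_neg, hsecond]
  simp only [dotProduct]
  ring

/- A dual measure on `C` supported at arbitrary points is moved to the points `c k` by splitting
each of its atoms `e` along a representation of `(e, CVaR (eᵀZ))`. -/
theorem setOf_dualObj_eq (hp : ∀ s, 0 < p s)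
    (hc : GeneratesGraph C (fun e => CVaR α pt fun i => e ⬝ᵥ z i) c) :
    {v | ∃ (K : ℕ) (c : Fin K → Fin d → ℝ) (mw : Fin K → ℝ) (nw : Fin m → Fin K → ℝ)
        (lam : Fin m1 → ℝ) (piv : Fin m → Fin m2 → ℝ),
        DualFeas α p A fv Tm Wm q gbar gtil C c mw nw lam piv ∧
        v = DualObj α p b hvec z pt c mw lam piv} =
      {v | ∃ Y μ ν, CVaRDualFeasible α p (twoStageMatrix p A Tm Wm) (twoStageCost p fv q)
        (fun s => of c * outcomeMatrix gbar gtil s) Y μ ν ∧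
        v = Y ⬝ᵥ twoStageBound p b hvec - μ ⬝ᵥ fun k => CVaR α pt fun i => c k ⬝ᵥ z i} := by
  ext v
  constructor
  · rintro ⟨K₀, c₀, mw, nw, lam, piv, h, rfl⟩
    obtain ⟨hc₀, h⟩ := (dualFeas_iff_cvarDualFeasible hp).1 h
    choose w hw hwc hwR using fun k₀ => hc.exists_weights (c₀ k₀) (hc₀ k₀)
    have hfactor : of c₀ = of w * of c := by
      ext k₀ i
      simp [← hwc k₀, mul_apply]
    have hvalue : (fun k₀ => CVaR α pt fun i => c₀ k₀ ⬝ᵥ z i) =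
        of w *ᵥ fun k => CVaR α pt fun i => c k ⬝ᵥ z i := funext fun k₀ => (hwR k₀).symm
    simp only [hfactor, Matrix.mul_assoc] at h
    refine ⟨_, _, _, h.vecMul (W := of w) hw, ?_⟩
    rw [dualObj_eq_dotProduct_twoStageBound_sub, hvalue, dotProduct_mulVec]
  · rintro ⟨Y, μ, ν, h, rfl⟩
    obtain ⟨lam, piv, rfl⟩ : ∃ lam piv, Y = Sum.elim lam (Function.uncurry piv) :=
      ⟨Y ∘ .inl, fun s i => Y (.inr (s, i)), by ext (_ | _) <;> rfl⟩
    exact ⟨K, c, μ, ν, lam, piv, (dualFeas_iff_cvarDualFeasible hp).2 ⟨hc.mem, h⟩,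
      dualObj_eq_dotProduct_twoStageBound_sub.symm⟩

end TwoStageDuality

theorem linear_strong_duality_general {m m1 m2 n1 n2 d τ : ℕ}
    {p : Fin m → ℝ} (hp : ∀ s, 0 < p s) (hp1 : ∑ s, p s = 1)
    {α : ℝ} (hα : α ∈ Set.Ico (0 : ℝ) 1)
    (A : Matrix (Fin m1) (Fin n1) ℝ) (b : Fin m1 → ℝ) (fv : Fin n1 → ℝ)
    (Tm : Fin m → Matrix (Fin m2) (Fin n1) ℝ)
    (Wm : Fin m → Matrix (Fin m2) (Fin n2) ℝ)
    (q : Fin m → Fin n2 → ℝ) (hvec : Fin m → Fin m2 → ℝ)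
    (gbar : Fin m → Matrix (Fin d) (Fin n1) ℝ)
    (gtil : Fin m → Matrix (Fin d) (Fin n2) ℝ)
    (z : Fin τ → Fin d → ℝ) {pt : Fin τ → ℝ} (hpt : pt ∈ stdSimplex ℝ (Fin τ))
    {C : Set (Fin d → ℝ)}
    (hC : ∃ F : Finset (Fin d → ℝ), C = convexHull ℝ (F : Set (Fin d → ℝ))) (v : ℝ) :
    IsGLB {v : ℝ | ∃ x y, PrimalFeas α p A b Tm Wm hvec gbar gtil z pt C x y ∧
        v = PrimalObj p fv q x y} v ↔
      IsLUB {v : ℝ | ∃ (K : ℕ) (c : Fin K → Fin d → ℝ) (mw : Fin K → ℝ)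
        (nw : Fin m → Fin K → ℝ) (lam : Fin m1 → ℝ) (piv : Fin m → Fin m2 → ℝ),
        DualFeas α p A fv Tm Wm q gbar gtil C c mw nw lam piv ∧
        v = DualObj α p b hvec z pt c mw lam piv} v := by
  obtain ⟨F, rfl⟩ := hC
  obtain ⟨K, c, hc⟩ := exists_generatesGraph_cvar hα hpt
    (fun i => (dotProductBilin ℝ ℝ).flip (z i)) F
  rw [setOf_primalObj_eq hα hp hp1 hc, setOf_dualObj_eq hp hc]
  exact isGLB_cvarFeasible_iff_isLUB_cvarDualFeasible hα hp hp1

/-- Theorem A.1, strong duality part: (LinearP) has a finite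
optimal value iff (LinearD) does, in which case the optimal values coincide. -/
theorem linear_strong_duality
    (m m1 m2 n1 n2 d τ : ℕ)
    (p : Fin m → ℝ) (hp : ∀ s, 0 < p s) (hp1 : ∑ s, p s = 1)
    (α : ℝ) (hα0 : 0 ≤ α) (hα1 : α < 1)
    (A : Matrix (Fin m1) (Fin n1) ℝ) (b : Fin m1 → ℝ) (fv : Fin n1 → ℝ)
    (Tm : Fin m → Matrix (Fin m2) (Fin n1) ℝ)
    (Wm : Fin m → Matrix (Fin m2) (Fin n2) ℝ)
    (q : Fin m → Fin n2 → ℝ) (hvec : Fin m → Fin m2 → ℝ)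
    (gbar : Fin m → Matrix (Fin d) (Fin n1) ℝ)
    (gtil : Fin m → Matrix (Fin d) (Fin n2) ℝ)
    (z : Fin τ → Fin d → ℝ)
    (pt : Fin τ → ℝ) (hpt : ∀ i, 0 < pt i) (hpt1 : ∑ i, pt i = 1)
    (C : Set (Fin d → ℝ)) (hCsub : C ⊆ {c | (∀ i, 0 ≤ c i) ∧ ∑ i, c i = 1})
    (hCpoly : ∃ F : Finset (Fin d → ℝ), C = convexHull ℝ (F : Set (Fin d → ℝ)))
    :
    ((∃ v : ℝ, IsGLB {v : ℝ | ∃ x y,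
        PrimalFeas α p A b Tm Wm hvec gbar gtil z pt C x y ∧
        v = PrimalObj p fv q x y} v) ↔
      (∃ v : ℝ, IsLUB {v : ℝ | ∃ (K : ℕ) (c : Fin K → Fin d → ℝ) (mw : Fin K → ℝ)
        (nw : Fin m → Fin K → ℝ) (lam : Fin m1 → ℝ) (piv : Fin m → Fin m2 → ℝ),
        DualFeas α p A fv Tm Wm q gbar gtil C c mw nw lam piv ∧
        v = DualObj α p b hvec z pt c mw lam piv} v)) ∧
    ∀ v w : ℝ,
      IsGLB {v : ℝ | ∃ x y,
        PrimalFeas α p A b Tm Wm hvec gbar gtil z pt C x y ∧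
        v = PrimalObj p fv q x y} v →
      IsLUB {v : ℝ | ∃ (K : ℕ) (c : Fin K → Fin d → ℝ) (mw : Fin K → ℝ)
        (nw : Fin m → Fin K → ℝ) (lam : Fin m1 → ℝ) (piv : Fin m → Fin m2 → ℝ),
        DualFeas α p A fv Tm Wm q gbar gtil C c mw nw lam piv ∧
        v = DualObj α p b hvec z pt c mw lam piv} w →
      v = w := by
  have key := linear_strong_duality_general hp hp1 ⟨hα0, hα1⟩ A b fv Tm Wm q hvec gbar gtil z
    ⟨fun i => (hpt i).le, hpt1⟩ hCpoly
  exact ⟨exists_congr key, fun v w hv hw => ((key v).1 hv).unique hw⟩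
end

section
/- Theorem A.2, strong Lagrangian duality: assume the set {(x,y) : x ∈ X, y_s ∈ Y(x,s) for all s ∈ S} is nonempty and compact. If (LinearP) has an optimal solution, then the Lagrangian dual problem (LagrangianD): maximize over finitely supported nonnegative measures μ on C the value inf{L(x,y,μ) : x ∈ X, y_s ∈ Y(x,s) for all s ∈ S}, also has an optimal solution, and the optimal values of (LinearP) and (LagrangianD) coincide. -/
open Matrix
open scoped BigOperators Classical

/-- The Lagrangian `L(x,y,μ)` for a finitely supported nonnegative measure `μ`
on `C` with support points `c k` and weights `mw k`. -/
noncomputable def Lagr {m n1 n2 d τ K : ℕ} (α : ℝ) (p : Fin m → ℝ)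
    (fv : Fin n1 → ℝ) (q : Fin m → Fin n2 → ℝ)
    (gbar : Fin m → Matrix (Fin d) (Fin n1) ℝ)
    (gtil : Fin m → Matrix (Fin d) (Fin n2) ℝ)
    (z : Fin τ → Fin d → ℝ) (pt : Fin τ → ℝ)
    (c : Fin K → Fin d → ℝ) (mw : Fin K → ℝ)
    (x : Fin n1 → ℝ) (y : Fin m → Fin n2 → ℝ) : ℝ :=
  PrimalObj p fv q x y
    + ∑ k, mw k * CVaR α p (fun s => c k ⬝ᵥ Ghat gbar gtil x y s)
    - ∑ k, mw k * CVaR α pt (fun i => c k ⬝ᵥ z i)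

/-! A linear program in `(x, y)` satisfies strong duality, so the point is to replace the infinitely
many CVaR constraints by finitely many linear ones without losing any scalarization. By the
Rockafellar–Uryasev formula the epigraph of CVaR is a finitely generated cone, so by
Minkowski–Weyl CVaR is a maximum of finitely many linear functionals. For the same reason the
epigraph of `c ↦ CVaR (c ⬝ᵥ Z)` over the simplicial parametrization of `C` is generated by finitely
many points; since `c ↦ CVaR (c ⬝ᵥ Ĝ(x, y))` is sublinear, the dominance constraint holds on `C` as
soon as it holds at those points. The Farkas lemma yields nonnegative multipliers, and those of
the linear pieces belonging to one point `c` add up to the mass of `μ` at `c`. -/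

namespace PolyhedralDuality

section MinkowskiWeyl

variable {R M N : Type*} [Field R] [LinearOrder R] [IsStrictOrderedRing R]
  [AddCommGroup M] [Module R M] [AddCommGroup N] [Module R N] {p : M →ₗ[R] N →ₗ[R] R}

-- Fourier–Motzkin elimination of one variable: `t` is the largest lower bound.
theorem exists_nonneg_forall_mul_le_iff {ι : Type*} (s : Finset ι) (a b : ι → R) :
    (∃ t, 0 ≤ t ∧ ∀ i ∈ s, t * a i ≤ b i) ↔
      (∀ i ∈ s, 0 ≤ a i → 0 ≤ b i) ∧
        ∀ i ∈ s, 0 < a i → ∀ j ∈ s, a j < 0 → 0 ≤ a i * b j - a j * b i := by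
  constructor
  · rintro ⟨t, ht, hle⟩
    refine ⟨fun i hi hai => (mul_nonneg ht hai).trans (hle i hi), fun i hi hai j hj haj => ?_⟩
    nlinarith [mul_le_mul_of_nonneg_left (hle j hj) hai.le,
      mul_le_mul_of_nonpos_left (hle i hi) haj.le]
  · rintro ⟨hb, hab⟩
    let L : Finset R := insert 0 ((s.filter (a · < 0)).image fun j => b j / a j)
    have hL : L.Nonempty := Finset.insert_nonempty _ _
    refine ⟨L.max' hL, L.le_max' 0 (Finset.mem_insert_self _ _), fun i hi => ?_⟩
    rcases lt_trichotomy (a i) 0 with hai | hai | hai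
    · rw [← div_le_iff_of_neg hai]
      exact L.le_max' _ (Finset.mem_insert_of_mem
        (Finset.mem_image_of_mem _ (Finset.mem_filter.2 ⟨hi, hai⟩)))
    · simpa [hai] using hb i hi hai.ge
    · rw [← le_div_iff₀ hai]
      refine L.max'_le hL _ fun t ht => ?_
      rcases Finset.mem_insert.1 ht with rfl | ht
      · exact div_nonneg (hb i hi hai.le) hai.le
      · obtain ⟨j, hj, rfl⟩ := Finset.mem_image.1 ht
        obtain ⟨hj, haj⟩ := Finset.mem_filter.1 hj
        rw [div_le_iff_of_neg haj, div_mul_eq_mul_div, div_le_iff₀ hai]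
        linarith [hab i hi hai j hj haj]

theorem dualFG_bot [Module.Finite R M] (hp : p.SeparatingRight) :
    (⊥ : PointedCone R N).DualFG p := by
  obtain ⟨s, hs⟩ := Module.Finite.fg_top (R := R) (M := M)
  refine ⟨s ∪ s.image (-·), PointedCone.ext fun y => ⟨fun hy => ?_, ?_⟩⟩
  · have hvanish : p.flip y = 0 := LinearMap.ext_on hs fun x hx => le_antisymm
      (by simpa using hy (x := -x) (by simpa using .inr (by simpa using hx)))
      (hy (by simpa using .inl (by simpa using hx)))
    exact hp y fun x => LinearMap.congr_fun hvanish x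
  · rintro rfl
    exact zero_mem _

theorem mem_sup_hull_singleton_iff {C : PointedCone R N} {x y : N} :
    y ∈ C ⊔ PointedCone.hull R {x} ↔ ∃ t : R, 0 ≤ t ∧ y - t • x ∈ C := by
  simp only [Submodule.mem_sup, PointedCone.hull, Submodule.mem_span_singleton]
  constructor
  · rintro ⟨z, hz, _, ⟨t, rfl⟩, rfl⟩
    exact ⟨t, t.2, by simpa [Nonneg.mk_smul] using hz⟩
  · rintro ⟨t, ht, h⟩
    exact ⟨_, h, _, ⟨⟨t, ht⟩, rfl⟩, by simp⟩

theorem dualFG_sup_hull_singleton {C : PointedCone R N} (hC : C.DualFG p) (x : N) :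
    (C ⊔ PointedCone.hull R {x}).DualFG p := by
  obtain ⟨s, rfl⟩ := hC
  let mixed := (s.filter (0 < p · x) ×ˢ s.filter (p · x < 0)).image
    fun ij => p ij.1 x • ij.2 - p ij.2 x • ij.1
  refine ⟨s.filter (0 ≤ p · x) ∪ mixed, PointedCone.ext fun y => ?_⟩
  have helim := exists_nonneg_forall_mul_le_iff s (p · x) (p · y)
  rw [mem_sup_hull_singleton_iff]
  simp only [PointedCone.mem_dual, Finset.mem_coe, map_sub, map_smul, smul_eq_mul, sub_nonneg]
  rw [helim]
  simp only [Finset.mem_union, Finset.mem_filter, mixed, Finset.mem_image, Finset.mem_product]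
  constructor
  · intro h
    refine ⟨fun i hi hai => h (.inl ⟨hi, hai⟩), fun i hi hai j hj haj => ?_⟩
    simpa using h (.inr ⟨(i, j), ⟨⟨hi, hai⟩, hj, haj⟩, rfl⟩)
  · rintro ⟨hb, hab⟩ _ (⟨hi, hai⟩ | ⟨ij, ⟨⟨hi, hai⟩, hj, haj⟩, rfl⟩)
    · exact hb _ hi hai
    · simpa using hab _ hi hai _ hj haj

theorem dualFG_of_fg [Module.Finite R M] (hp : p.SeparatingRight) {C : PointedCone R N}
    (hC : C.FG) : C.DualFG p := by
  obtain ⟨s, rfl⟩ := hC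
  induction s using Finset.induction_on with
  | empty => simpa using dualFG_bot hp
  | insert x s _ ih =>
    rw [Finset.coe_insert, Submodule.span_insert, sup_comm]
    exact dualFG_sup_hull_singleton ih x

theorem dual_flip_dual_of_finite [Module.Finite R N] (hp : p.SeparatingLeft) {s : Set M}
    (hs : s.Finite) :
    PointedCone.dual p.flip (PointedCone.dual p s) = PointedCone.hull R s := by
  rw [← PointedCone.dual_hull (p := p) s]
  exact (dualFG_of_fg (LinearMap.flip_separatingRight.2 hp)
    (Submodule.fg_span hs)).dual_flip_dual

theorem fg_of_dualFG [Module.Finite R M] [Module.Finite R N] (hp : p.Nondegenerate)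
    {C : PointedCone R N} (hC : C.DualFG p) : C.FG := by
  obtain ⟨s, rfl⟩ := hC
  obtain ⟨t, ht⟩ := dualFG_of_fg (LinearMap.flip_separatingRight.2 hp.1)
    (Submodule.fg_span (R := {c : R // 0 ≤ c}) s.finite_toSet)
  refine ⟨t, ?_⟩
  have hbipolar := dual_flip_dual_of_finite (p := p.flip)
    (LinearMap.flip_separatingLeft.2 hp.2) t.finite_toSet
  rw [ht] at hbipolar
  exact hbipolar.symm.trans (PointedCone.dual_hull (p := p) _)

end MinkowskiWeyl

section LinearProgramming

variable {R V ι : Type*} [Field R] [LinearOrder R] [IsStrictOrderedRing R]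
  [AddCommGroup V] [Module R V]

theorem mul_le_apply_of_forall_le {a : ι → Module.Dual R V} {b : ι → R} {f : Module.Dual R V}
    {β : R} (hne : ∃ v, ∀ i, a i v ≤ b i) (hf : ∀ v, (∀ i, a i v ≤ b i) → β ≤ f v)
    {v : V} {t : R} (ht : 0 ≤ t) (hv : ∀ i, a i v ≤ t * b i) : t * β ≤ f v := by
  obtain ⟨v₀, hv₀⟩ := hne
  have hgap : 0 ≤ f v₀ - β := sub_nonneg.2 (hf v₀ hv₀)
  refine le_of_forall_pos_le_add fun ε hε => ?_
  -- Moving from `(v, t)` towards `(v₀, 1)` makes the last coordinate positive.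
  obtain ⟨δ, hδ, hδε⟩ : ∃ δ > 0, δ * (f v₀ - β) ≤ ε :=
    ⟨ε / (f v₀ - β + 1), by positivity, by
      rw [div_mul_eq_mul_div, div_le_iff₀ (by positivity)]
      linarith⟩
  have htδ : 0 < t + δ := by positivity
  have hfeas : ∀ i, a i ((t + δ)⁻¹ • (v + δ • v₀)) ≤ b i := fun i => by
    rw [map_smul, smul_eq_mul, inv_mul_le_iff₀ htδ, map_add, map_smul, smul_eq_mul]
    linarith [hv i, mul_le_mul_of_nonneg_left (hv₀ i) hδ.le]
  have hβ := hf _ hfeas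
  rw [map_smul, smul_eq_mul, le_inv_mul_iff₀ htδ, map_add, map_smul, smul_eq_mul] at hβ
  linarith

theorem exists_lagrange_multiplier_of_forall_le [FiniteDimensional R V] [Fintype ι]
    {a : ι → Module.Dual R V} {b : ι → R} {f : Module.Dual R V} {β : R}
    (hne : ∃ v, ∀ i, a i v ≤ b i) (hf : ∀ v, (∀ i, a i v ≤ b i) → β ≤ f v) :
    ∃ w : ι → R, (∀ i, 0 ≤ w i) ∧ ∀ v, β ≤ f v + ∑ i, w i * (a i v - b i) := by
  let slack (i : ι) : Module.Dual R (V × R) :=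
    b i • LinearMap.snd R V R - a i ∘ₗ LinearMap.fst R V R
  let generators : Set (Module.Dual R (V × R)) := insert (LinearMap.snd R V R) (Set.range slack)
  have hdual : f ∘ₗ LinearMap.fst R V R - β • LinearMap.snd R V R ∈
      PointedCone.dual LinearMap.id.flip (PointedCone.dual .id generators) := fun x hx => by
    have ht : 0 ≤ x.2 := hx (Set.mem_insert _ _)
    have hslack : ∀ i, a i x.1 ≤ x.2 * b i := fun i => by
      simpa [slack, mul_comm] using hx (Set.mem_insert_of_mem _ (Set.mem_range_self i))
    simpa [mul_comm] using mul_le_apply_of_forall_le hne hf ht hslack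
  rw [dual_flip_dual_of_finite LinearMap.id_separatingLeft ((Set.finite_range slack).insert _),
    PointedCone.hull, Submodule.mem_span_insert] at hdual
  obtain ⟨t, _, hspan, heq⟩ := hdual
  obtain ⟨w, rfl⟩ := (Submodule.mem_span_range_iff_exists_fun _).1 hspan
  refine ⟨fun i => w i, fun i => (w i).2, fun v => ?_⟩
  have happly : f v - β = t + ∑ i, w i * (b i - a i v) := by
    simpa [slack, ← Nonneg.coe_smul] using LinearMap.congr_fun heq (v, 1)
  have hneg : ∑ i, (w i : R) * (a i v - b i) = -∑ i, (w i : R) * (b i - a i v) := by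
    simp only [← Finset.sum_neg_distrib, ← mul_neg, neg_sub]
  linarith [t.2]

end LinearProgramming

/-- `S` is a polyhedron: the solution set of finitely many weak linear inequalities. -/
def IsPolyhedron (R : Type*) {V : Type*} [Field R] [LinearOrder R] [IsStrictOrderedRing R]
    [AddCommGroup V] [Module R V] (S : Set V) : Prop :=
  ∃ T : Finset (Module.Dual R V × R), S = {v | ∀ h ∈ T, h.1 v ≤ h.2}

/-- `ρ` is sublinear: subadditive and positively homogeneous. Homogeneity is stated as an
inequality, which yields equality for positive factors. -/
structure IsSublinear {R E : Type*} [Field R] [LinearOrder R] [IsStrictOrderedRing R]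
    [AddCommGroup E] [Module R E] (ρ : E → R) : Prop where
  add_le : ∀ x y, ρ (x + y) ≤ ρ x + ρ y
  smul_le : ∀ c : R, 0 ≤ c → ∀ x, ρ (c • x) ≤ c * ρ x

/-- `ρ` is polyhedral sublinear: the pointwise maximum of finitely many (at least one) linear
functionals, the maximum being encoded as a least upper bound. -/
def IsPolyhedralSublinear {R E : Type*} [Field R] [LinearOrder R] [IsStrictOrderedRing R]
    [AddCommGroup E] [Module R E] (ρ : E → R) : Prop :=
  ∃ T : Finset (Module.Dual R E), ∀ v, IsLUB ((fun ℓ : Module.Dual R E => ℓ v) '' T) (ρ v)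

section Polyhedron

variable {R V : Type*} [Field R] [LinearOrder R] [IsStrictOrderedRing R]
  [AddCommGroup V] [Module R V]

theorem isPolyhedron_setOf_le {ι : Type*} [Finite ι] (L : V →ₗ[R] ι → R) (b : ι → R) :
    IsPolyhedron R {v | L v ≤ b} :=
  have := Fintype.ofFinite ι
  ⟨Finset.univ.image fun i => (.proj i ∘ₗ L, b i), by simp [Pi.le_def]⟩

theorem isPolyhedron_setOf_ge {ι : Type*} [Finite ι] (L : V →ₗ[R] ι → R) (b : ι → R) :
    IsPolyhedron R {v | b ≤ L v} := by
  simpa using isPolyhedron_setOf_le (-L) (-b)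

theorem IsPolyhedron.inter {S S' : Set V} (hS : IsPolyhedron R S) (hS' : IsPolyhedron R S') :
    IsPolyhedron R (S ∩ S') := by
  obtain ⟨T, rfl⟩ := hS
  obtain ⟨T', rfl⟩ := hS'
  exact ⟨T ∪ T', by ext v; simp only [Finset.forall_mem_union]; rfl⟩

theorem IsPolyhedron.iInter {ι : Type*} [Finite ι] {S : ι → Set V}
    (hS : ∀ i, IsPolyhedron R (S i)) : IsPolyhedron R (⋂ i, S i) := by
  have := Fintype.ofFinite ι
  choose T hT using hS
  refine ⟨Finset.univ.biUnion T, ?_⟩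
  ext v
  simp only [hT, Set.mem_iInter, Set.mem_ofPred_eq, Finset.mem_biUnion, Finset.mem_univ, true_and]
  exact ⟨fun h e ⟨i, hi⟩ => h i e hi, fun h i e hi => h e ⟨i, hi⟩⟩

end Polyhedron

namespace IsSublinear

variable {R E F : Type*} [Field R] [LinearOrder R] [IsStrictOrderedRing R]
  [AddCommGroup E] [Module R E] [AddCommGroup F] [Module R F] {ρ : E → R}

theorem map_zero (hρ : IsSublinear ρ) : ρ 0 = 0 := by
  have hadd := hρ.add_le 0 0
  have hsmul := hρ.smul_le 0 le_rfl 0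
  rw [add_zero] at hadd
  rw [smul_zero, zero_mul] at hsmul
  linarith

theorem apply_fst_le_snd_of_mem_hull (hρ : IsSublinear ρ) {G : Set (E × R)}
    (hG : ∀ g ∈ G, ρ g.1 ≤ g.2) {x : E × R} (hx : x ∈ PointedCone.hull R G) : ρ x.1 ≤ x.2 := by
  induction hx using Submodule.span_induction with
  | mem g hg => exact hG g hg
  | zero => exact hρ.map_zero.le
  | add x y _ _ hx hy => exact (hρ.add_le _ _).trans (add_le_add hx hy)
  | smul c x _ hx => exact (hρ.smul_le c c.2 _).trans (mul_le_mul_of_nonneg_left hx c.2)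

theorem comp (hρ : IsSublinear ρ) (L : F →ₗ[R] E) : IsSublinear (ρ ∘ L) where
  add_le x y := by simpa using hρ.add_le (L x) (L y)
  smul_le c hc x := by simpa using hρ.smul_le c hc (L x)

end IsSublinear

namespace IsPolyhedralSublinear

variable {R E F : Type*} [Field R] [LinearOrder R] [IsStrictOrderedRing R]
  [AddCommGroup E] [Module R E] [AddCommGroup F] [Module R F] {ρ : E → R}

theorem exists_forall_le_iff (hρ : IsPolyhedralSublinear ρ) :
    ∃ T : Finset (Module.Dual R E), ∀ v r, ρ v ≤ r ↔ ∀ ℓ ∈ T, ℓ v ≤ r := by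
  obtain ⟨T, hT⟩ := hρ
  exact ⟨T, fun v r => by simp [isLUB_le_iff (hT v), mem_upperBounds]⟩

theorem comp (hρ : IsPolyhedralSublinear ρ) (L : F →ₗ[R] E) :
    IsPolyhedralSublinear (ρ ∘ L) := by
  obtain ⟨T, hT⟩ := hρ
  refine ⟨T.image (· ∘ₗ L), fun v => ?_⟩
  simpa [Set.image_image] using hT (L v)

theorem isSublinear (hρ : IsPolyhedralSublinear ρ) : IsSublinear ρ := by
  obtain ⟨T, hT⟩ := hρ.exists_forall_le_iff
  have happly {ℓ : Module.Dual R E} (hℓ : ℓ ∈ T) (v : E) : ℓ v ≤ ρ v := (hT v _).1 le_rfl ℓ hℓ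
  refine ⟨fun x y => (hT _ _).2 fun ℓ hℓ => ?_, fun c hc x => (hT _ _).2 fun ℓ hℓ => ?_⟩
  · rw [map_add]
    exact add_le_add (happly hℓ x) (happly hℓ y)
  · rw [map_smul, smul_eq_mul]
    exact mul_le_mul_of_nonneg_left (happly hℓ x) hc

theorem of_epigraph_fg [FiniteDimensional R E] {C : PointedCone R (E × R)} (hC : C.FG)
    (hle : ∀ v r, (v, r) ∈ C → ρ v ≤ r) (hlt : ∀ v r, ρ v < r → (v, r) ∈ C) :
    IsPolyhedralSublinear ρ := by
  obtain ⟨Φ, rfl⟩ := dualFG_of_fg LinearMap.id_separatingRight hC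
  have hsplit (φ : Module.Dual R (E × R)) (v : E) (r : R) :
      φ (v, r) = φ (v, 0) + r * φ (0, 1) := by
    rw [← smul_eq_mul, ← map_smul, ← map_add]
    simp
  have hslope : ∀ φ ∈ Φ, 0 ≤ φ (0, 1) := fun φ hφ => by
    have h : 0 ≤ φ (0, max (ρ 0) 0 + 1) :=
      hlt _ _ (lt_add_of_le_of_pos (le_max_left _ _) one_pos) hφ
    rw [hsplit, Prod.mk_zero_zero, map_zero, zero_add] at h
    exact nonneg_of_mul_nonneg_right h (by positivity)
  -- The half-space `0 ≤ φ (v, r)` is the epigraph of this functional.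
  let lower (φ : Module.Dual R (E × R)) : Module.Dual R E :=
    -(φ (0, 1))⁻¹ • φ ∘ₗ LinearMap.inl R E R
  have hlower {φ : Module.Dual R (E × R)} (hφ : 0 < φ (0, 1)) (v : E) (r : R) :
      lower φ v ≤ r ↔ 0 ≤ φ (v, r) := by
    have : lower φ v = -((φ (0, 1))⁻¹ * φ (v, 0)) := by simp [lower]
    rw [this, hsplit φ v r, neg_le_iff_add_nonneg, ← mul_nonneg_iff_of_pos_left hφ, mul_add,
      mul_inv_cancel_left₀ hφ.ne', add_comm, mul_comm r]
  refine ⟨(Φ.filter (0 < · (0, 1))).image lower, fun v => ⟨?_, fun r hr => hle v r fun φ hφ => ?_⟩⟩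
  · rintro _ ⟨_, hℓ, rfl⟩
    obtain ⟨φ, hφ, rfl⟩ := Finset.mem_image.1 hℓ
    obtain ⟨hφ, hpos⟩ := Finset.mem_filter.1 hφ
    exact le_of_forall_gt_imp_ge_of_dense fun r hr => (hlower hpos v r).2 (hlt v r hr hφ)
  · rcases (hslope φ hφ).eq_or_lt with hzero | hpos
    · have h : 0 ≤ φ (v, ρ v + 1) := hlt v _ (lt_add_one _) hφ
      rw [LinearMap.id_apply]
      rwa [hsplit, ← hzero, mul_zero] at h ⊢
    · exact (hlower hpos v r).1
        (hr ⟨_, Finset.mem_image_of_mem _ (Finset.mem_filter.2 ⟨hφ, hpos⟩), rfl⟩)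

theorem exists_finset_mem_hull_iff {ι : Type*} [Finite ι] {τ : (ι → R) → R}
    (hτ : IsPolyhedralSublinear τ) : ∃ G : Finset ((ι → R) × R), ∀ x,
      x ∈ PointedCone.hull R (G : Set ((ι → R) × R)) ↔ 0 ≤ x.1 ∧ τ x.1 ≤ x.2 := by
  have := Fintype.ofFinite ι
  obtain ⟨L, hL⟩ := hτ.exists_forall_le_iff
  let Φ : Finset (Module.Dual R ((ι → R) × R)) :=
    (Finset.univ.image fun i => LinearMap.proj i ∘ₗ LinearMap.fst R (ι → R) R) ∪
      L.image fun ℓ => LinearMap.snd R (ι → R) R - ℓ ∘ₗ LinearMap.fst R (ι → R) R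
  obtain ⟨G, hG⟩ := fg_of_dualFG LinearMap.id_nondegenerate ⟨Φ, rfl⟩
  refine ⟨G, fun x => ?_⟩
  rw [PointedCone.hull, hG]
  simp [Φ, hL, or_imp, forall_and, Pi.le_def]

end IsPolyhedralSublinear

theorem IsPolyhedron.exists_lagrange_multiplier {R V κ : Type*} [Field R] [LinearOrder R]
    [IsStrictOrderedRing R] [AddCommGroup V] [Module R V] [FiniteDimensional R V] [Fintype κ]
    {S : Set V} (hS : IsPolyhedron R S) {h : κ → V → R}
    (hh : ∀ k, IsPolyhedralSublinear (h k)) {r : κ → R} {f : Module.Dual R V} {β : R}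
    (hne : ∃ v ∈ S, ∀ k, h k v ≤ r k) (hf : ∀ v ∈ S, (∀ k, h k v ≤ r k) → β ≤ f v) :
    ∃ μ : κ → R, (∀ k, 0 ≤ μ k) ∧ ∀ v ∈ S, β ≤ f v + ∑ k, μ k * (h k v - r k) := by
  obtain ⟨T, rfl⟩ := hS
  choose L hL using fun k => (hh k).exists_forall_le_iff
  let a : T ⊕ (Σ k, L k) → Module.Dual R V := Sum.elim (·.1.1) (·.2.1)
  let b : T ⊕ (Σ k, L k) → R := Sum.elim (·.1.2) (r ·.1)
  have hsystem (v : V) : (∀ i, a i v ≤ b i) ↔ (∀ e ∈ T, e.1 v ≤ e.2) ∧ ∀ k, h k v ≤ r k := by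
    simp [a, b, hL, Sum.forall, Sigma.forall]
  obtain ⟨w, hw, hβ⟩ := exists_lagrange_multiplier_of_forall_le (f := f) (β := β)
    (hne.imp fun v hv => (hsystem v).2 hv)
    fun v hv => hf v ((hsystem v).1 hv).1 ((hsystem v).1 hv).2
  refine ⟨fun k => ∑ ℓ, w (.inr ⟨k, ℓ⟩), fun k => Finset.sum_nonneg fun _ _ => hw _,
    fun v hv => (hβ v).trans ?_⟩
  rw [Fintype.sum_sum_type, Fintype.sum_sigma]
  have hpoly : ∑ e, w (.inl e) * (a (.inl e) v - b (.inl e)) ≤ 0 :=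
    Finset.sum_nonpos fun e _ => mul_nonpos_of_nonneg_of_nonpos (hw _) (sub_nonpos.2 (hv e e.2))
  have hmax : ∑ k, ∑ ℓ, w (.inr ⟨k, ℓ⟩) * (a (.inr ⟨k, ℓ⟩) v - b (.inr ⟨k, ℓ⟩)) ≤
      ∑ k, (∑ ℓ, w (.inr ⟨k, ℓ⟩)) * (h k v - r k) := by
    simp only [Finset.sum_mul]
    gcongr with k _ ℓ _
    exacts [hw _, (hL k v _).1 le_rfl ℓ ℓ.2, le_rfl]
  linarith

section Scalarization

variable {R E ι : Type*} [Field R] [LinearOrder R] [IsStrictOrderedRing R]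
  [AddCommGroup E] [Module R E] [Fintype ι]

theorem IsPolyhedralSublinear.exists_finset_forall_le_stdSimplex {τ : (ι → R) → R}
    (hτ : IsPolyhedralSublinear τ) :
    ∃ P : Finset (ι → R), ↑P ⊆ stdSimplex R ι ∧ ∀ σ : (ι → R) → R,
      IsSublinear σ → (∀ t ∈ P, σ t ≤ τ t) → ∀ t ∈ stdSimplex R ι, σ t ≤ τ t := by
  obtain ⟨G, hG⟩ := hτ.exists_finset_mem_hull_iff
  have hgen : ∀ g ∈ G, 0 ≤ g.1 ∧ τ g.1 ≤ g.2 := fun g hg =>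
    (hG g).1 (PointedCone.subset_hull hg)
  let mass (t : ι → R) : R := ∑ i, t i
  refine ⟨(G.filter fun g => 0 < mass g.1).image fun g => (mass g.1)⁻¹ • g.1, ?_,
    fun σ hσ hle t ht => ?_⟩
  · intro _ ht
    obtain ⟨g, hg, rfl⟩ := Finset.mem_image.1 ht
    obtain ⟨hg, hpos⟩ := Finset.mem_filter.1 hg
    refine ⟨fun i => mul_nonneg (inv_nonneg.2 hpos.le) ((hgen g hg).1 i), ?_⟩
    simp only [Pi.smul_apply, smul_eq_mul, ← Finset.mul_sum]
    exact inv_mul_cancel₀ hpos.ne'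
  have hσgen : ∀ g ∈ G, σ g.1 ≤ g.2 := fun g hg => by
    obtain ⟨hnonneg, hτg⟩ := hgen g hg
    rcases (Finset.sum_nonneg fun i _ => hnonneg i).eq_or_lt with hzero | hpos
    · have hg0 : g.1 = 0 := funext fun i =>
        (Finset.sum_eq_zero_iff_of_nonneg fun i _ => hnonneg i).1 hzero.symm i (Finset.mem_univ i)
      rwa [hg0, hσ.map_zero, ← hτ.isSublinear.map_zero, ← hg0]
    · calc σ g.1 = σ (mass g.1 • (mass g.1)⁻¹ • g.1) := by rw [smul_inv_smul₀ hpos.ne']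
        _ ≤ mass g.1 * σ ((mass g.1)⁻¹ • g.1) := hσ.smul_le _ hpos.le _
        _ ≤ mass g.1 * τ ((mass g.1)⁻¹ • g.1) := mul_le_mul_of_nonneg_left
            (hle _ (Finset.mem_image_of_mem _ (Finset.mem_filter.2 ⟨hg, hpos⟩))) hpos.le
        _ ≤ mass g.1 * ((mass g.1)⁻¹ * τ g.1) := mul_le_mul_of_nonneg_left
            (hτ.isSublinear.smul_le _ (inv_nonneg.2 hpos.le) _) hpos.le
        _ = τ g.1 := mul_inv_cancel_left₀ hpos.ne' _
        _ ≤ g.2 := hτg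
  exact hσ.apply_fst_le_snd_of_mem_hull hσgen ((hG (t, τ t)).2 ⟨ht.1, le_rfl⟩)

theorem IsPolyhedralSublinear.exists_finset_forall_le_convexHull {τ : E → R}
    (hτ : IsPolyhedralSublinear τ) {F : Set E} (hF : F.Finite) :
    ∃ P : Finset E, ↑P ⊆ convexHull R F ∧ ∀ σ : E → R,
      IsSublinear σ → (∀ c ∈ P, σ c ≤ τ c) → ∀ c ∈ convexHull R F, σ c ≤ τ c := by
  let := hF.fintype
  obtain ⟨L, hL⟩ : ∃ L : (F → R) →ₗ[R] E, convexHull R F = L '' stdSimplex R F :=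
    ⟨_, hF.convexHull_eq_image⟩
  obtain ⟨P, hP, hle⟩ := (hτ.comp L).exists_finset_forall_le_stdSimplex
  rw [hL]
  refine ⟨P.image L, ?_, fun σ hσ hσP => ?_⟩
  · simpa using Set.image_mono hP
  · rintro _ ⟨t, ht, rfl⟩
    exact hle _ (hσ.comp L) (fun t ht => hσP _ (Finset.mem_image_of_mem L ht)) t ht

end Scalarization

theorem exists_scalarization_multiplier {R V E Y : Type*} [Field R] [LinearOrder R]
    [IsStrictOrderedRing R] [AddCommGroup V] [Module R V] [FiniteDimensional R V]
    [AddCommGroup E] [Module R E] [AddCommGroup Y] [Module R Y]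
    {S : Set V} (hS : IsPolyhedron R S) (Γ : E →ₗ[R] V →ₗ[R] Y) {ρ : Y → R} {τ : E → R}
    (hρ : IsPolyhedralSublinear ρ) (hτ : IsPolyhedralSublinear τ) {F : Set E} (hF : F.Finite)
    {f : Module.Dual R V} {β : R}
    (hne : ∃ v ∈ S, ∀ c ∈ convexHull R F, ρ (Γ c v) ≤ τ c)
    (hf : ∀ v ∈ S, (∀ c ∈ convexHull R F, ρ (Γ c v) ≤ τ c) → β ≤ f v) :
    ∃ (K : ℕ) (c : Fin K → E) (μ : Fin K → R), (∀ k, c k ∈ convexHull R F) ∧ (∀ k, 0 ≤ μ k) ∧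
      ∀ v ∈ S, β ≤ f v + ∑ k, μ k * (ρ (Γ (c k) v) - τ (c k)) := by
  obtain ⟨P, hP, hle⟩ := hτ.exists_finset_forall_le_convexHull hF
  let c (k : Fin P.card) : E := P.equivFin.symm k
  have hc (k) : c k ∈ convexHull R F := hP (P.equivFin.symm k).2
  obtain ⟨μ, hμ, hβ⟩ := hS.exists_lagrange_multiplier (h := fun k v => ρ (Γ (c k) v))
    (r := fun k => τ (c k)) (f := f) (β := β) (fun k => hρ.comp (Γ (c k)))
    (hne.imp fun v hv => ⟨hv.1, fun k => hv.2 _ (hc k)⟩)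
    fun v hv hck => hf v hv (hle _ (hρ.comp (Γ.flip v)).isSublinear fun e he => by
      simpa [c] using hck (P.equivFin ⟨e, he⟩))
  exact ⟨P.card, c, μ, hc, hμ, hβ⟩

section CVaR

variable {ι : Type*} [Fintype ι] {α : ℝ} {p : ι → ℝ}

/-- The Rockafellar–Uryasev objective, whose infimum over the threshold `η` is `CVaR`. -/
noncomputable def cvarObjective (α : ℝ) (p v : ι → ℝ) (η : ℝ) : ℝ :=
  η + (1 - α)⁻¹ * ∑ s, p s * max (v s - η) 0

theorem CVaR_eq_iInf (α : ℝ) (p v : ι → ℝ) : CVaR α p v = ⨅ η, cvarObjective α p v η :=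
  congrArg sInf (Set.ext fun _ => exists_congr fun _ => eq_comm)

theorem sum_mul_le_cvarObjective (hp : ∀ s, 0 ≤ p s) (hp1 : ∑ s, p s = 1) (hα0 : 0 ≤ α)
    (hα1 : α < 1) (v : ι → ℝ) (η : ℝ) : ∑ s, p s * v s ≤ cvarObjective α p v η := by
  have hexcess : 0 ≤ ∑ s, p s * max (v s - η) 0 :=
    Finset.sum_nonneg fun s _ => mul_nonneg (hp s) (le_max_right _ _)
  calc ∑ s, p s * v s ≤ ∑ s, p s * (η + max (v s - η) 0) :=
        Finset.sum_le_sum fun s _ => mul_le_mul_of_nonneg_left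
          (by linarith [le_max_left (v s - η) 0]) (hp s)
    _ = η + ∑ s, p s * max (v s - η) 0 := by
        simp only [mul_add, Finset.sum_add_distrib, ← Finset.sum_mul, hp1, one_mul]
    _ ≤ cvarObjective α p v η := add_le_add_right (le_mul_of_one_le_left hexcess
        (one_le_inv₀ (sub_pos.2 hα1) |>.2 (sub_le_self 1 hα0))) η

theorem CVaR_le_cvarObjective (hp : ∀ s, 0 ≤ p s) (hp1 : ∑ s, p s = 1) (hα0 : 0 ≤ α)
    (hα1 : α < 1) (v : ι → ℝ) (η : ℝ) : CVaR α p v ≤ cvarObjective α p v η := by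
  rw [CVaR_eq_iInf]
  exact ciInf_le ⟨_, Set.forall_mem_range.2 (sum_mul_le_cvarObjective hp hp1 hα0 hα1 v)⟩ η

theorem cvarObjective_add_le (hp : ∀ s, 0 ≤ p s) (hα1 : α < 1) (v w : ι → ℝ) (η θ : ℝ) :
    cvarObjective α p (v + w) (η + θ) ≤ cvarObjective α p v η + cvarObjective α p w θ := by
  have hα : 0 ≤ (1 - α)⁻¹ := inv_nonneg.2 (sub_nonneg.2 hα1.le)
  have hsum : ∑ s, p s * max ((v + w) s - (η + θ)) 0 ≤
      ∑ s, p s * max (v s - η) 0 + ∑ s, p s * max (w s - θ) 0 := by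
    rw [← Finset.sum_add_distrib]
    refine Finset.sum_le_sum fun s _ => ?_
    rw [← mul_add, Pi.add_apply, add_sub_add_comm]
    refine mul_le_mul_of_nonneg_left ?_ (hp s)
    exact max_le (add_le_add (le_max_left _ _) (le_max_left _ _))
      (add_nonneg (le_max_right _ _) (le_max_right _ _))
  unfold cvarObjective
  linarith [mul_le_mul_of_nonneg_left hsum hα]

theorem cvarObjective_smul {c : ℝ} (hc : 0 ≤ c) (v : ι → ℝ) (η : ℝ) :
    cvarObjective α p (c • v) (c * η) = c * cvarObjective α p v η := by
  have hmax (s) : max ((c • v) s - c * η) 0 = c * max (v s - η) 0 := by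
    rw [mul_max_of_nonneg _ _ hc, mul_zero, mul_sub, Pi.smul_apply, smul_eq_mul]
  simp only [cvarObjective, hmax, mul_left_comm _ c, ← Finset.mul_sum, ← mul_add]

theorem isSublinear_CVaR (hp : ∀ s, 0 ≤ p s) (hp1 : ∑ s, p s = 1) (hα0 : 0 ≤ α) (hα1 : α < 1) :
    IsSublinear (CVaR α p) where
  add_le v w := by
    rw [CVaR_eq_iInf α p v, CVaR_eq_iInf α p w]
    exact le_ciInf_add_ciInf fun η θ =>
      (CVaR_le_cvarObjective hp hp1 hα0 hα1 _ _).trans (cvarObjective_add_le hp hα1 v w η θ)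
  smul_le c hc v := by
    rw [CVaR_eq_iInf α p v, Real.mul_iInf_of_nonneg hc]
    exact le_ciInf fun η => cvarObjective_smul (α := α) (p := p) hc v η ▸
      CVaR_le_cvarObjective hp hp1 hα0 hα1 _ _

/-- Generators of the epigraph cone of `CVaR α p`: shifting the threshold, raising the bound, and
charging or discarding the excess in a single scenario. -/
noncomputable def cvarGenerators (α : ℝ) (p : ι → ℝ) : Set ((ι → ℝ) × ℝ) :=
  {(1, 1), (-1, -1), (0, 1)} ∪
    ((Set.range fun s => (Pi.single s 1, (1 - α)⁻¹ * p s)) ∪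
      Set.range fun s => (-Pi.single s 1, 0))

theorem CVaR_le_of_mem_cvarGenerators (hp : ∀ s, 0 ≤ p s) (hp1 : ∑ s, p s = 1) (hα0 : 0 ≤ α)
    (hα1 : α < 1) : ∀ g ∈ cvarGenerators α p, CVaR α p g.1 ≤ g.2 := by
  have hle (v η) := CVaR_le_cvarObjective hp hp1 hα0 hα1 v η
  rintro _ ((rfl | rfl | rfl) | ⟨s, rfl⟩ | ⟨s, rfl⟩)
  · simpa [cvarObjective] using hle 1 1
  · simpa [cvarObjective] using hle (-1) (-1)
  · simpa [cvarObjective] using (hle 0 0).trans (by simp [cvarObjective])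
  · have hmax (i : ι) : max ((Pi.single s 1 : ι → ℝ) i) 0 = if i = s then 1 else 0 := by
      rw [Pi.single_apply, max_eq_left (by split_ifs <;> simp)]
    exact (hle _ 0).trans_eq (by simp [cvarObjective, hmax])
  · have hmax (i : ι) : max (-(Pi.single s 1 : ι → ℝ) i) 0 = 0 := by
      rw [Pi.single_apply, max_eq_right (by split_ifs <;> simp)]
    exact (hle _ 0).trans_eq (by simp [cvarObjective, hmax])

theorem mem_hull_cvarGenerators (α : ℝ) (p v : ι → ℝ) {η r : ℝ}
    (hr : cvarObjective α p v η ≤ r) :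
    (v, r) ∈ PointedCone.hull ℝ (cvarGenerators α p) := by
  set C := PointedCone.hull ℝ (cvarGenerators α p)
  have hgen {g} (hg : g ∈ cvarGenerators α p) {t : ℝ} (ht : 0 ≤ t) : t • g ∈ C :=
    PointedCone.smul_mem _ ht (PointedCone.subset_hull hg)
  have hshift : η • ((1 : ι → ℝ), (1 : ℝ)) ∈ C := by
    rcases le_total 0 η with hη | hη
    · exact hgen (by simp [cvarGenerators]) hη
    · simpa using hgen (g := (-1, -1)) (by simp [cvarGenerators]) (neg_nonneg.2 hη)
  have hexcess : ∑ s, max (v s - η) 0 • ((Pi.single s 1 : ι → ℝ), (1 - α)⁻¹ * p s) ∈ C :=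
    sum_mem fun s _ => hgen (.inr (.inl ⟨s, rfl⟩)) (le_max_right _ _)
  have hdeficit : ∑ s, max (η - v s) 0 • (-(Pi.single s 1 : ι → ℝ), (0 : ℝ)) ∈ C :=
    sum_mem fun s _ => hgen (.inr (.inr ⟨s, rfl⟩)) (le_max_right _ _)
  have hslack : (r - cvarObjective α p v η) • ((0 : ι → ℝ), (1 : ℝ)) ∈ C :=
    hgen (by simp [cvarGenerators]) (sub_nonneg.2 hr)
  convert add_mem (add_mem (add_mem hshift hexcess) hdeficit) hslack using 1
  ext i
  · have hparts := max_zero_sub_eq_self (v i - η)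
    rw [neg_sub] at hparts
    suffices v i = η + max (v i - η) 0 + -max (η - v i) 0 by
      simpa [Prod.fst_sum, Pi.single_apply]
    linarith
  · have hcost : ∑ s, max (v s - η) 0 * ((1 - α)⁻¹ * p s) =
        (1 - α)⁻¹ * ∑ s, p s * max (v s - η) 0 := by
      rw [Finset.mul_sum]
      exact Finset.sum_congr rfl fun s _ => by ring
    suffices r = η + ∑ s, max (v s - η) 0 * ((1 - α)⁻¹ * p s) +
        (r - (η + (1 - α)⁻¹ * ∑ s, p s * max (v s - η) 0)) by
      simpa [Prod.snd_sum, cvarObjective]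
    linarith

theorem finite_cvarGenerators {κ : Type*} [Finite κ] (α : ℝ) (p : κ → ℝ) :
    (cvarGenerators α p).Finite :=
  (Set.toFinite _).union ((Set.finite_range _).union (Set.finite_range _))

theorem isPolyhedralSublinear_CVaR (hp : ∀ s, 0 ≤ p s) (hp1 : ∑ s, p s = 1) (hα0 : 0 ≤ α)
    (hα1 : α < 1) : IsPolyhedralSublinear (CVaR α p) := by
  refine .of_epigraph_fg (Submodule.fg_span (finite_cvarGenerators α p)) (fun v r h => ?_)
    fun v r h => ?_
  · exact (isSublinear_CVaR hp hp1 hα0 hα1).apply_fst_le_snd_of_mem_hull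
      (x := (v, r)) (CVaR_le_of_mem_cvarGenerators hp hp1 hα0 hα1) h
  · rw [CVaR_eq_iInf] at h
    obtain ⟨η, hη⟩ := exists_lt_of_ciInf_lt h
    exact mem_hull_cvarGenerators α p v hη.le

end CVaR

section TwoStage

variable {m m1 m2 n1 n2 d τ K : ℕ}

theorem isPolyhedron_setOf_inXY (A : Matrix (Fin m1) (Fin n1) ℝ) (b : Fin m1 → ℝ)
    (Tm : Fin m → Matrix (Fin m2) (Fin n1) ℝ) (Wm : Fin m → Matrix (Fin m2) (Fin n2) ℝ)
    (hvec : Fin m → Fin m2 → ℝ) :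
    IsPolyhedron ℝ {v : (Fin n1 → ℝ) × (Fin m → Fin n2 → ℝ) | InXY A b Tm Wm hvec v.1 v.2} := by
  let X : (Fin n1 → ℝ) × (Fin m → Fin n2 → ℝ) →ₗ[ℝ] Fin n1 → ℝ := .fst ℝ _ _
  let Y (s : Fin m) : (Fin n1 → ℝ) × (Fin m → Fin n2 → ℝ) →ₗ[ℝ] Fin n2 → ℝ :=
    .proj s ∘ₗ .snd ℝ _ _
  have hsystem : {v : (Fin n1 → ℝ) × (Fin m → Fin n2 → ℝ) | InXY A b Tm Wm hvec v.1 v.2} =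
      {v | 0 ≤ X v} ∩ ({v | (A.mulVecLin ∘ₗ X) v ≤ b} ∩ ⋂ s, {v | 0 ≤ Y s v} ∩
        {v | hvec s ≤ ((Tm s).mulVecLin ∘ₗ X + (Wm s).mulVecLin ∘ₗ Y s) v}) := by
    ext v
    simp [InXY, X, Y, Pi.le_def]
  rw [hsystem]
  exact (isPolyhedron_setOf_ge _ _).inter <| (isPolyhedron_setOf_le _ _).inter <|
    IsPolyhedron.iInter fun s => (isPolyhedron_setOf_ge _ _).inter (isPolyhedron_setOf_ge _ _)

/-- The scenario vector `(c ⬝ᵥ ĝ_s(x, y_s))_s` as a bilinear function of the scalarization `c` and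
the decision `(x, y)`. -/
noncomputable def scalarizedOutcome (gbar : Fin m → Matrix (Fin d) (Fin n1) ℝ)
    (gtil : Fin m → Matrix (Fin d) (Fin n2) ℝ) :
    (Fin d → ℝ) →ₗ[ℝ] (Fin n1 → ℝ) × (Fin m → Fin n2 → ℝ) →ₗ[ℝ] Fin m → ℝ :=
  LinearMap.mk₂ ℝ (fun c v s => c ⬝ᵥ Ghat gbar gtil v.1 v.2 s)
    (fun c c' v => funext fun s => add_dotProduct c c' _)
    (fun t c v => funext fun s => smul_dotProduct t c _)
    (fun c v w => funext fun s => by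
      simp only [Ghat, Prod.fst_add, Prod.snd_add, Pi.add_apply, mulVec_add, dotProduct_add]
      ring)
    (fun t c v => funext fun s => by
      simp only [Ghat, Prod.smul_fst, Prod.smul_snd, Pi.smul_apply, mulVec_smul, ← smul_add,
        dotProduct_smul])

theorem isLinearMap_primalObj (p : Fin m → ℝ) (fv : Fin n1 → ℝ) (q : Fin m → Fin n2 → ℝ) :
    IsLinearMap ℝ fun v : (Fin n1 → ℝ) × (Fin m → Fin n2 → ℝ) => PrimalObj p fv q v.1 v.2 where
  map_add v w := by
    simp only [PrimalObj, Prod.fst_add, Prod.snd_add, Pi.add_apply, dotProduct_add, mul_add,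
      Finset.sum_add_distrib]
    ring
  map_smul t v := by
    simp only [PrimalObj, Prod.smul_fst, Prod.smul_snd, Pi.smul_apply, dotProduct_smul,
      smul_eq_mul, mul_left_comm _ t, ← Finset.mul_sum, mul_add]

variable {α : ℝ} {p : Fin m → ℝ} {A : Matrix (Fin m1) (Fin n1) ℝ} {b : Fin m1 → ℝ}
  {fv : Fin n1 → ℝ} {Tm : Fin m → Matrix (Fin m2) (Fin n1) ℝ}
  {Wm : Fin m → Matrix (Fin m2) (Fin n2) ℝ} {q : Fin m → Fin n2 → ℝ} {hvec : Fin m → Fin m2 → ℝ}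
  {gbar : Fin m → Matrix (Fin d) (Fin n1) ℝ} {gtil : Fin m → Matrix (Fin d) (Fin n2) ℝ}
  {z : Fin τ → Fin d → ℝ} {pt : Fin τ → ℝ} {C : Set (Fin d → ℝ)} {c : Fin K → Fin d → ℝ}
  {mw : Fin K → ℝ} {x : Fin n1 → ℝ} {y : Fin m → Fin n2 → ℝ}

theorem lagr_eq_primalObj_add_sum : Lagr α p fv q gbar gtil z pt c mw x y =
    PrimalObj p fv q x y + ∑ k, mw k * (CVaR α p (fun s => c k ⬝ᵥ Ghat gbar gtil x y s) -
      CVaR α pt fun i => c k ⬝ᵥ z i) := by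
  simp only [Lagr, mul_sub, Finset.sum_sub_distrib, add_sub_assoc]

theorem lagr_le_primalObj (hxy : PrimalFeas α p A b Tm Wm hvec gbar gtil z pt C x y)
    (hc : ∀ k, c k ∈ C) (hmw : ∀ k, 0 ≤ mw k) :
    Lagr α p fv q gbar gtil z pt c mw x y ≤ PrimalObj p fv q x y := by
  rw [lagr_eq_primalObj_add_sum]
  exact add_le_of_nonpos_right (Finset.sum_nonpos fun k _ =>
    mul_nonpos_of_nonneg_of_nonpos (hmw k) (sub_nonpos.2 (hxy.2 _ (hc k))))

theorem exists_forall_primalObj_le_lagr (hp : ∀ s, 0 ≤ p s) (hp1 : ∑ s, p s = 1) (hα0 : 0 ≤ α)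
    (hα1 : α < 1) (hpt : ∀ i, 0 ≤ pt i) (hpt1 : ∑ i, pt i = 1)
    (hC : ∃ F : Finset (Fin d → ℝ), C = convexHull ℝ (F : Set (Fin d → ℝ)))
    (hxy : PrimalFeas α p A b Tm Wm hvec gbar gtil z pt C x y)
    (hopt : ∀ x' y', PrimalFeas α p A b Tm Wm hvec gbar gtil z pt C x' y' →
      PrimalObj p fv q x y ≤ PrimalObj p fv q x' y') :
    ∃ (K : ℕ) (c : Fin K → Fin d → ℝ) (mw : Fin K → ℝ), (∀ k, c k ∈ C) ∧ (∀ k, 0 ≤ mw k) ∧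
      ∀ x' y', InXY A b Tm Wm hvec x' y' →
        PrimalObj p fv q x y ≤ Lagr α p fv q gbar gtil z pt c mw x' y' := by
  obtain ⟨F, rfl⟩ := hC
  have hbenchmark := (isPolyhedralSublinear_CVaR hpt hpt1 hα0 hα1).comp
    (Matrix.of z)ᵀ.vecMulLinear
  obtain ⟨K, c, mw, hc, hmw, hle⟩ := exists_scalarization_multiplier
    (isPolyhedron_setOf_inXY A b Tm Wm hvec) (scalarizedOutcome gbar gtil)
    (isPolyhedralSublinear_CVaR hp hp1 hα0 hα1) hbenchmark F.finite_toSet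
    (f := (isLinearMap_primalObj p fv q).mk') ⟨(x, y), hxy⟩ fun v hv hcv => hopt v.1 v.2 ⟨hv, hcv⟩
  exact ⟨K, c, mw, hc, hmw, fun x' y' h => (hle (x', y') h).trans_eq
    lagr_eq_primalObj_add_sum.symm⟩

end TwoStage

end PolyhedralDuality

open PolyhedralDuality in
theorem strong_lagrangian_duality_general
    (m m1 m2 n1 n2 d τ : ℕ)
    (p : Fin m → ℝ) (hp : ∀ s, 0 ≤ p s) (hp1 : ∑ s, p s = 1)
    (α : ℝ) (hα0 : 0 ≤ α) (hα1 : α < 1)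
    (A : Matrix (Fin m1) (Fin n1) ℝ) (b : Fin m1 → ℝ) (fv : Fin n1 → ℝ)
    (Tm : Fin m → Matrix (Fin m2) (Fin n1) ℝ)
    (Wm : Fin m → Matrix (Fin m2) (Fin n2) ℝ)
    (q : Fin m → Fin n2 → ℝ) (hvec : Fin m → Fin m2 → ℝ)
    (gbar : Fin m → Matrix (Fin d) (Fin n1) ℝ)
    (gtil : Fin m → Matrix (Fin d) (Fin n2) ℝ)
    (z : Fin τ → Fin d → ℝ)
    (pt : Fin τ → ℝ) (hpt : ∀ i, 0 ≤ pt i) (hpt1 : ∑ i, pt i = 1)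
    (C : Set (Fin d → ℝ))
    (hCpoly : ∃ F : Finset (Fin d → ℝ), C = convexHull ℝ (F : Set (Fin d → ℝ)))
    (xstar : Fin n1 → ℝ) (ystar : Fin m → Fin n2 → ℝ)
    (hPstar : PrimalFeas α p A b Tm Wm hvec gbar gtil z pt C xstar ystar)
    (hopt : ∀ x y, PrimalFeas α p A b Tm Wm hvec gbar gtil z pt C x y →
      PrimalObj p fv q xstar ystar ≤ PrimalObj p fv q x y) :
    ∃ (K : ℕ) (c : Fin K → Fin d → ℝ) (mw : Fin K → ℝ),
      (∀ k, c k ∈ C) ∧ (∀ k, 0 ≤ mw k) ∧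
      IsGLB {v : ℝ | ∃ x y, InXY A b Tm Wm hvec x y ∧
          v = Lagr α p fv q gbar gtil z pt c mw x y}
        (PrimalObj p fv q xstar ystar) ∧
      ∀ (K' : ℕ) (c' : Fin K' → Fin d → ℝ) (mw' : Fin K' → ℝ),
        (∀ k, c' k ∈ C) → (∀ k, 0 ≤ mw' k) →
        ∀ dv : ℝ,
          (∀ v ∈ {v : ℝ | ∃ x y, InXY A b Tm Wm hvec x y ∧
              v = Lagr α p fv q gbar gtil z pt c' mw' x y}, dv ≤ v) →
          dv ≤ PrimalObj p fv q xstar ystar := by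
  have hweak (K' : ℕ) (c' : Fin K' → Fin d → ℝ) (mw' : Fin K' → ℝ) (hc' : ∀ k, c' k ∈ C)
      (hmw' : ∀ k, 0 ≤ mw' k) (dv : ℝ) (hdv : ∀ v ∈ {v : ℝ | ∃ x y, InXY A b Tm Wm hvec x y ∧
        v = Lagr α p fv q gbar gtil z pt c' mw' x y}, dv ≤ v) :
      dv ≤ PrimalObj p fv q xstar ystar :=
    (hdv _ ⟨xstar, ystar, hPstar.1, rfl⟩).trans (lagr_le_primalObj hPstar hc' hmw')
  obtain ⟨K, c, mw, hc, hmw, hle⟩ :=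
    exists_forall_primalObj_le_lagr hp hp1 hα0 hα1 hpt hpt1 hCpoly hPstar hopt
  refine ⟨K, c, mw, hc, hmw, ⟨?_, hweak K c mw hc hmw⟩, hweak⟩
  rintro _ ⟨x, y, hxy, rfl⟩
  exact hle x y hxy

/-- Theorem A.2, strong Lagrangian duality: if the joint
feasible region is nonempty and compact and (LinearP) has an optimal solution
`(xstar, ystar)`, then the Lagrangian dual has an optimal solution `μ*` whose
dual value equals the optimal value of (LinearP). -/
theorem strong_lagrangian_duality
    (m m1 m2 n1 n2 d τ : ℕ)
    (p : Fin m → ℝ) (hp : ∀ s, 0 < p s) (hp1 : ∑ s, p s = 1)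
    (α : ℝ) (hα0 : 0 ≤ α) (hα1 : α < 1)
    (A : Matrix (Fin m1) (Fin n1) ℝ) (b : Fin m1 → ℝ) (fv : Fin n1 → ℝ)
    (Tm : Fin m → Matrix (Fin m2) (Fin n1) ℝ)
    (Wm : Fin m → Matrix (Fin m2) (Fin n2) ℝ)
    (q : Fin m → Fin n2 → ℝ) (hvec : Fin m → Fin m2 → ℝ)
    (gbar : Fin m → Matrix (Fin d) (Fin n1) ℝ)
    (gtil : Fin m → Matrix (Fin d) (Fin n2) ℝ)
    (z : Fin τ → Fin d → ℝ)
    (pt : Fin τ → ℝ) (hpt : ∀ i, 0 < pt i) (hpt1 : ∑ i, pt i = 1)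
    (C : Set (Fin d → ℝ)) (hCsub : C ⊆ {c | (∀ i, 0 ≤ c i) ∧ ∑ i, c i = 1})
    (hCpoly : ∃ F : Finset (Fin d → ℝ), C = convexHull ℝ (F : Set (Fin d → ℝ)))
    (hne : ∃ x y, InXY A b Tm Wm hvec x y)
    (hcpt : IsCompact {v : (Fin n1 → ℝ) × (Fin m → Fin n2 → ℝ) |
      InXY A b Tm Wm hvec v.1 v.2})
    (xstar : Fin n1 → ℝ) (ystar : Fin m → Fin n2 → ℝ)
    (hPstar : PrimalFeas α p A b Tm Wm hvec gbar gtil z pt C xstar ystar)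
    (hopt : ∀ x y, PrimalFeas α p A b Tm Wm hvec gbar gtil z pt C x y →
      PrimalObj p fv q xstar ystar ≤ PrimalObj p fv q x y) :
    ∃ (K : ℕ) (c : Fin K → Fin d → ℝ) (mw : Fin K → ℝ),
      (∀ k, c k ∈ C) ∧ (∀ k, 0 ≤ mw k) ∧
      -- the dual value of μ* equals the primal optimal value
      IsGLB {v : ℝ | ∃ x y, InXY A b Tm Wm hvec x y ∧
          v = Lagr α p fv q gbar gtil z pt c mw x y}
        (PrimalObj p fv q xstar ystar) ∧
      -- μ* is optimal for the Lagrangian dual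
      ∀ (K' : ℕ) (c' : Fin K' → Fin d → ℝ) (mw' : Fin K' → ℝ),
        (∀ k, c' k ∈ C) → (∀ k, 0 ≤ mw' k) →
        ∀ dv : ℝ,
          (∀ v ∈ {v : ℝ | ∃ x y, InXY A b Tm Wm hvec x y ∧
              v = Lagr α p fv q gbar gtil z pt c' mw' x y}, dv ≤ v) →
          dv ≤ PrimalObj p fv q xstar ystar :=
  strong_lagrangian_duality_general m m1 m2 n1 n2 d τ p (fun s => (hp s).le) hp1 α hα0 hα1 A b fv
    Tm Wm q hvec gbar gtil z pt (fun i => (hpt i).le) hpt1 C hCpoly xstar ystar hPstar hopt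
end
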